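/- arXiv:2506.20909 — 7 statements merged into one kernel-verified Lean document; each statement's English description precedes it below -/
import Mathlib

section
/- Let A, n, k be integers with A > 2 and n > 3 such that χ_n(A) = 2k. Then the map Ψ : [−n, n] → ℤ/kℤ defined by Ψ(i) = ψ_i(A) mod k is injective; that is, for all integers i, j with −n ≤ i, j ≤ n, if ψ_i(A) ≡ ψ_j(A) (mod k) then i = j. -/
/-- The Lucas sequence `ψ_n(A)` for natural indices:
`ψ_0 = 0`, `ψ_1 = 1`, `ψ_{n+2} = A·ψ_{n+1} − ψ_n`. -/
def psiNat (A : ℤ) : ℕ → ℤ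
  | 0 => 0
  | 1 => 1
  | n + 2 => A * psiNat A (n + 1) - psiNat A n

/-- The Lucas sequence `χ_n(A)` for natural indices:
`χ_0 = 2`, `χ_1 = A`, `χ_{n+2} = A·χ_{n+1} − χ_n`. -/
def chiNat (A : ℤ) : ℕ → ℤ
  | 0 => 2
  | 1 => A
  | n + 2 => A * chiNat A (n + 1) - chiNat A n

/-- The Lucas sequence `ψ_n(A)` for `n ∈ ℤ`: the unique solution of
`x_{n+1} = A·x_n − x_{n−1}` with `ψ_0 = 0`, `ψ_1 = 1`
(for negative indices, `ψ_{−n} = −ψ_n`). -/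
def psi (A : ℤ) : ℤ → ℤ
  | .ofNat n => psiNat A n
  | .negSucc n => -psiNat A (n + 1)

/-- The Lucas sequence `χ_n(A)` for `n ∈ ℤ`: the unique solution of
`x_{n+1} = A·x_n − x_{n−1}` with `χ_0 = 2`, `χ_1 = A`
(for negative indices, `χ_{−n} = χ_n`). -/
def chi (A : ℤ) : ℤ → ℤ
  | .ofNat n => chiNat A n
  | .negSucc n => chiNat A (n + 1)

/-!
The sequence `ψ` is odd and, for `A > 2`, strictly increasing with `2ψ_m < ψ_{m+1}`. Hence a
difference `ψ_i − ψ_j` with `−n ≤ j < i ≤ n` is a sum `ψ_i + ψ_l` with `l = −j ≤ n`, and it lies in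
`(0, 2ψ_n]`. Since `χ_n = ψ_{n+1} − ψ_{n−1}` gives `k > ψ_n`, the only multiple of `k` it could
equal is `k` itself. But `k` exceeds `2ψ_n` if `A ≥ 5`, and otherwise falls strictly between two
consecutive sums of this form: between `ψ_n + ψ_{n−1}` and `ψ_n + ψ_n` if `A = 4`, and between
`ψ_n + ψ_{n−3}` and `ψ_n + ψ_{n−2}` if `A = 3`.
The latter follows from `χ_n = 2(ψ_n + ψ_{n−2}) − ψ_{n−3}`.
-/

section Identities

variable (A : ℤ)

theorem psi_neg (m : ℤ) : psi A (-m) = -psi A m := by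
  rcases m with (_ | m) | m
  · exact neg_zero.symm
  · rfl
  · exact (neg_neg _).symm

theorem psi_add_one (m : ℤ) : psi A (m + 1) = A * psi A m - psi A (m - 1) := by
  have psi_natCast_add_two (m : ℕ) : psi A (m + 2) = A * psi A (m + 1) - psi A m := rfl
  rcases m with (_ | m) | m
  · rw [show (Int.ofNat 0) - 1 = -1 from rfl, psi_neg]
    simp [psi, psiNat]
  · simpa [add_assoc] using psi_natCast_add_two m
  · rw [Int.negSucc_eq, show -((m : ℤ) + 1) + 1 = -m by ring,
      show -((m : ℤ) + 1) - 1 = -(m + 2) by ring]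
    simp only [psi_neg, psi_natCast_add_two]
    ring

theorem chiNat_add_one (m : ℕ) : chiNat A (m + 1) = psiNat A (m + 2) - psiNat A m := by
  induction m using Nat.twoStepInduction with
  | zero => simp [psiNat, chiNat]
  | one => grind [psiNat, chiNat]
  | more m ih₀ ih₁ => grind [psiNat, chiNat]

theorem chi_eq_psi_sub_psi (m : ℤ) : chi A m = psi A (m + 1) - psi A (m - 1) := by
  rcases m with (_ | m) | m
  · rfl
  · have chi_natCast_add_one : chi A (m + 1) = psi A (m + 2) - psi A m := chiNat_add_one A m
    simpa [add_assoc] using chi_natCast_add_one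
  · rw [Int.negSucc_eq, show -((m : ℤ) + 1) + 1 = -m by ring,
      show -((m : ℤ) + 1) - 1 = -(m + 2) by ring, psi_neg, psi_neg, neg_sub_neg]
    exact chiNat_add_one A m

theorem chi_eq_mul_psi_sub (m : ℤ) : chi A m = A * psi A m - 2 * psi A (m - 1) := by
  rw [chi_eq_psi_sub_psi, psi_add_one]
  ring

end Identities

section Growth

variable {A : ℤ}

theorem psiNat_nonneg_and_lt_succ (hA : 2 ≤ A) (m : ℕ) :
    0 ≤ psiNat A m ∧ psiNat A m < psiNat A (m + 1) := by
  induction m with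
  | zero => simp [psiNat]
  | succ m ih =>
    obtain ⟨h_nonneg, h_lt⟩ := ih
    refine ⟨by linarith, ?_⟩
    rw [psiNat]
    nlinarith

theorem psi_strictMono (hA : 2 ≤ A) : StrictMono (psi A) := by
  have psiNat_strictMono : StrictMono (psiNat A) :=
    strictMono_nat_of_lt_succ fun m ↦ (psiNat_nonneg_and_lt_succ hA m).2
  refine strictMono_of_odd_strictMonoOn_nonneg (psi_neg A) fun a ha b hb hab ↦ ?_
  lift a to ℕ using ha
  lift b to ℕ using hb
  exact psiNat_strictMono (by exact_mod_cast hab)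

theorem psi_nonneg (hA : 2 ≤ A) {m : ℤ} (hm : 0 ≤ m) : 0 ≤ psi A m :=
  (psi_strictMono hA).monotone hm

theorem psi_pos (hA : 2 ≤ A) {m : ℤ} (hm : 0 < m) : 0 < psi A m :=
  psi_strictMono hA hm

theorem two_mul_psi_lt_psi_add_one (hA : 2 < A) (m : ℤ) : 2 * psi A m < psi A (m + 1) := by
  have h_mono := psi_strictMono hA.le
  rcases le_or_gt m 0 with hm | hm
  · have h_nonpos : psi A m ≤ 0 := h_mono.monotone hm
    linarith [h_mono (lt_add_one m)]
  · have h_prev : psi A (m - 1) < psi A m := h_mono (sub_one_lt m)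
    rw [psi_add_one]
    nlinarith [psi_pos hA.le hm]

theorem two_mul_psi_sub_one_lt_psi (hA : 2 < A) (m : ℤ) : 2 * psi A (m - 1) < psi A m := by
  simpa only [sub_add_cancel] using two_mul_psi_lt_psi_add_one hA (m - 1)

theorem two_mul_psi_lt_chi (hA : 2 < A) {n : ℤ} (hn : 0 ≤ n) : 2 * psi A n < chi A n := by
  rw [chi_eq_mul_psi_sub]
  nlinarith [two_mul_psi_sub_one_lt_psi hA n, psi_nonneg hA.le hn]

theorem psi_add_psi_le_or_le (hA : 2 < A) {i l m n : ℤ} (hm : 0 ≤ m) (hi : i ≤ n) (hl : l ≤ n) :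
    psi A i + psi A l ≤ psi A n + psi A m ∨ psi A n + psi A (m + 1) ≤ psi A i + psi A l := by
  have h_mono := (psi_strictMono hA.le).monotone
  wlog hli : l ≤ i generalizing i l
  · rw [add_comm (psi A i)]
    exact this hl hi (le_of_not_ge hli)
  rcases hi.eq_or_lt with rfl | hin
  · rcases le_or_gt l m with hlm | hml
    · exact .inl (by gcongr; exact h_mono hlm)
    · exact .inr (by gcongr; exact h_mono hml)
  · left
    calc psi A i + psi A l ≤ psi A i + psi A i := by gcongr; exact h_mono hli
      _ = 2 * psi A i := (two_mul _).symm
      _ ≤ psi A (i + 1) := (two_mul_psi_lt_psi_add_one hA i).le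
      _ ≤ psi A n := h_mono hin
      _ ≤ psi A n + psi A m := le_add_of_nonneg_right (psi_nonneg hA.le hm)

end Growth

section Gaps

variable {A n : ℤ}

theorem four_mul_psi_lt_chi (hA : 5 ≤ A) (hn : 0 ≤ n) : 4 * psi A n < chi A n := by
  have h_nonneg : 0 ≤ psi A n := psi_nonneg (by linarith) hn
  have h_double := two_mul_psi_sub_one_lt_psi (by linarith : 2 < A) n
  rw [chi_eq_mul_psi_sub]
  nlinarith

theorem chi_four_mem_Ioo (hn : 1 < n) :
    chi 4 n ∈ Set.Ioo (2 * (psi 4 n + psi 4 (n - 1))) (2 * (psi 4 n + psi 4 n)) := by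
  have h_pos : 0 < psi 4 (n - 1) := psi_pos (by norm_num) (by linarith)
  have h_double := two_mul_psi_sub_one_lt_psi (by norm_num : (2 : ℤ) < 4) n
  rw [chi_eq_mul_psi_sub]
  constructor <;> linarith

theorem chi_three_mem_Ioo (hn : 3 < n) :
    chi 3 n ∈ Set.Ioo (2 * (psi 3 n + psi 3 (n - 3))) (2 * (psi 3 n + psi 3 (n - 2))) := by
  have h_pos : 0 < psi 3 (n - 3) := psi_pos (by norm_num) (by linarith)
  have h_double : 2 * psi 3 (n - 3) < psi 3 (n - 2) := by
    convert two_mul_psi_lt_psi_add_one (by norm_num : (2 : ℤ) < 3) (n - 3) using 2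
    ring
  have h_psi : psi 3 n = 3 * psi 3 (n - 1) - psi 3 (n - 2) := by
    convert psi_add_one 3 (n - 1) using 3 <;> ring
  have h_psi_pred : psi 3 (n - 1) = 3 * psi 3 (n - 2) - psi 3 (n - 3) := by
    convert psi_add_one 3 (n - 2) using 3 <;> ring
  have h_chi : chi 3 n = 2 * (psi 3 n + psi 3 (n - 2)) - psi 3 (n - 3) := by
    rw [chi_eq_mul_psi_sub]
    linarith
  constructor <;> linarith

theorem two_mul_psi_add_psi_ne_chi (hA : 2 < A) (hn : 3 < n) {i l : ℤ} (hi : i ≤ n) (hl : l ≤ n) :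
    2 * (psi A i + psi A l) ≠ chi A n := by
  obtain rfl | rfl | hA₅ : A = 3 ∨ A = 4 ∨ 5 ≤ A := by omega
  · obtain ⟨h_lower, h_upper⟩ := chi_three_mem_Ioo hn
    have h_gap := psi_add_psi_le_or_le hA (by linarith : 0 ≤ n - 3) hi hl
    rw [show n - 3 + 1 = n - 2 by ring] at h_gap
    rcases h_gap with h_le | h_ge <;> linarith
  · obtain ⟨h_lower, h_upper⟩ := chi_four_mem_Ioo (by linarith : 1 < n)
    have h_gap := psi_add_psi_le_or_le hA (by linarith : 0 ≤ n - 1) hi hl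
    rw [sub_add_cancel] at h_gap
    rcases h_gap with h_le | h_ge <;> linarith
  · have h_mono := (psi_strictMono hA.le).monotone
    linarith [four_mul_psi_lt_chi hA₅ (by linarith : 0 ≤ n), h_mono hi, h_mono hl]

end Gaps

/-- Let `A > 2`, `n > 3` with `χ_n(A) = 2k`.  Then the residues
`ψ_i(A) mod k` for `i ∈ [−n, n]` are pairwise distinct: if
`ψ_i(A) ≡ ψ_j(A) (mod k)` for `i, j ∈ [−n, n]`, then `i = j`. -/
theorem psi_residues_injective (A n k : ℤ) (hA : 2 < A) (hn : 3 < n)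
    (hchi : chi A n = 2 * k)
    (i j : ℤ) (hi₁ : -n ≤ i) (hi₂ : i ≤ n) (hj₁ : -n ≤ j) (hj₂ : j ≤ n)
    (h : psi A i ≡ psi A j [ZMOD k]) :
    i = j := by
  by_contra hne
  wlog hij : j < i generalizing i j
  · exact this j i hj₁ hj₂ hi₁ hi₂ h.symm (Ne.symm hne) (lt_of_le_of_ne (not_lt.mp hij) hne)
  have h_mono := psi_strictMono hA.le
  have hl : -j ≤ n := neg_le.mp hj₁
  have h_add : psi A i - psi A j = psi A i + psi A (-j) := by rw [psi_neg, sub_eq_add_neg]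
  have h_lt : psi A n < k := by linarith [two_mul_psi_lt_chi hA (by linarith : 0 ≤ n)]
  have h_diff_pos : 0 < psi A i - psi A j := sub_pos.mpr (h_mono hij)
  have h_diff_lt : psi A i - psi A j < 2 * k := by
    linarith [h_mono.monotone hi₂, h_mono.monotone hl]
  have h_diff_eq : psi A i - psi A j = k := by
    obtain ⟨t, ht⟩ := h.symm.dvd
    have ht_pos : 0 < t := by nlinarith
    have ht_lt : t < 2 := by nlinarith
    obtain rfl : t = 1 := by omega
    rw [ht, mul_one]
  exact two_mul_psi_add_psi_ne_chi hA hn hi₂ hl (by rw [← h_add, h_diff_eq, hchi])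
end

section
/- Let A, B, U, V be integers with B > 0 and U² − A·U·V + V² ≠ 0. Then (U·V)^{B−1}·ψ_B(A) ≡ Σ_{r=0}^{B−1} U^{2r}·V^{2(B−1−r)} (mod U² − A·U·V + V²). -/
/-!
Both sides are values of the same polynomial `D`, the Dickson polynomial of the second kind of
index `B − 1` with parameter `U²V²`. As `ψ_B(A)` is the value at `A` of the one with parameter `1`,
rescaling by `UV` gives `(UV)^{B−1}·ψ_B(A) = D(UV·A)`, while the geometric sum is `D(U² + V²)`.
The two arguments differ by exactly the modulus.
-/

section Dickson

open Polynomial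

variable {R : Type*} [CommRing R]

lemma dickson_sq_mul_eval_mul (k : ℕ) (a c x : R) (n : ℕ) :
    (dickson k (c ^ 2 * a) n).eval (c * x) = c ^ n * (dickson k a n).eval x := by
  induction n using Nat.twoStepInduction with
  | zero => simp
  | one => simp
  | more n ih₀ ih₁ =>
    simp only [dickson_add_two, eval_sub, eval_mul, eval_X, eval_C, ih₀, ih₁]
    ring

lemma dickson_two_mul_eval_add (x y : R) (n : ℕ) :
    (dickson 2 (x * y) n).eval (x + y) = ∑ r ∈ Finset.range (n + 1), x ^ r * y ^ (n - r) := by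
  induction n using Nat.twoStepInduction with
  | zero => norm_num
  | one => simp [Finset.sum_range_succ, add_comm]
  | more n ih₀ ih₁ =>
    have sum_succ (m : ℕ) : ∑ r ∈ Finset.range (m + 2), x ^ r * y ^ (m + 1 - r) =
        x ^ (m + 1) + y * ∑ r ∈ Finset.range (m + 1), x ^ r * y ^ (m - r) :=
      geom_sum₂_succ_eq x y
    rw [dickson_add_two, eval_sub, eval_mul, eval_mul, eval_X, eval_C, ih₀, ih₁,
      sum_succ (n + 1), sum_succ n]
    ring

end Dickson

lemma psiNat_succ_eq_dickson_two_one_eval (A : ℤ) (n : ℕ) :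
    psiNat A (n + 1) = (Polynomial.dickson 2 1 n).eval A := by
  induction n using Nat.twoStepInduction with
  | zero => norm_num [psiNat]
  | one => simp [psiNat]
  | more n ih₀ ih₁ =>
    rw [psiNat, ih₀, ih₁]
    simp [Polynomial.dickson_add_two]

/-- Let `A, U, V` be integers and `B > 0` with `U² − AUV + V² ≠ 0`. Then
`(UV)^{B−1}·ψ_B(A) ≡ ∑_{r=0}^{B−1} U^{2r}·V^{2(B−1−r)} (mod U² − AUV + V²)`. -/
theorem psi_exp_congruence (A U V : ℤ) (B : ℕ) (hB : 0 < B)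
    (h : U ^ 2 - A * U * V + V ^ 2 ≠ 0) :
    (U * V) ^ (B - 1) * psi A (B : ℤ) ≡
      ∑ r ∈ Finset.range B, U ^ (2 * r) * V ^ (2 * (B - 1 - r))
      [ZMOD U ^ 2 - A * U * V + V ^ 2] := by
  obtain ⟨n, rfl⟩ := Nat.exists_eq_add_one.mpr hB
  have modulus_eq : U ^ 2 - A * U * V + V ^ 2 = (U ^ 2 + V ^ 2) - U * V * A := by ring
  have psi_eq : (U * V) ^ n * psi A ↑(n + 1) =
      (Polynomial.dickson 2 (U ^ 2 * V ^ 2) n).eval (U * V * A) := calc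
    _ = (U * V) ^ n * (Polynomial.dickson 2 1 n).eval A :=
      congrArg _ (psiNat_succ_eq_dickson_two_one_eval A n)
    _ = _ := by rw [← dickson_sq_mul_eval_mul, mul_one, mul_pow]
  have sum_eq : ∑ r ∈ Finset.range (n + 1), U ^ (2 * r) * V ^ (2 * (n - r)) =
      (Polynomial.dickson 2 (U ^ 2 * V ^ 2) n).eval (U ^ 2 + V ^ 2) := by
    simp only [dickson_two_mul_eval_add, pow_mul]
  rw [Nat.add_sub_cancel, psi_eq, sum_eq, modulus_eq]
  exact Int.modEq_iff_dvd.mpr (Polynomial.sub_dvd_eval_sub _ _ _)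
end

section
/- Fix an integer B > 0 and consider, for integers A and W, the congruence 3·W·ψ_B(A) ≡ 2(W² − 1) (mod 2A − 5). If W = 2^B, then the congruence holds for every integer A. Conversely, if the congruence holds and |A| ≥ max{W⁴, 2^{4B}}, then W = 2^B. -/
/-!
Modulo `m = V * A - V ^ 2 - 1`, the base `V` is a root of the characteristic polynomial
`X ^ 2 - A * X + 1` of the recurrence; the other root is `V⁻¹`, so
`ψ_n ≡ (V ^ n - V ^ (-n)) / (V - V⁻¹)`, which becomes the congruence for `W = V ^ n` once the
denominators are cleared. Read as a quadratic equation in `W`, the congruence has constant term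
`-1` after division by `V`, so its other root is `-V ^ (-n)`. Hence every solution satisfies
`m ∣ (V ^ n - W) * (W * V ^ n + 1)`. When `A` is large the right-hand side is smaller than `m` in
absolute value, so it vanishes, and `W * V ^ n = -1` is impossible for `2 ≤ |V|`.
-/

theorem sq_sub_one_mul_pow_mul_psiNat_modEq {A V m : ℤ} (hV : V * A ≡ V ^ 2 + 1 [ZMOD m])
    (n : ℕ) :
    (V ^ 2 - 1) * V ^ n * psiNat A n ≡ V * ((V ^ n) ^ 2 - 1) [ZMOD m] := by
  induction n using psiNat.induct with
  | case1 => simp [psiNat]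
  | case2 => simp only [psiNat]; ring_nf; rfl
  | case3 n ih_succ ih =>
    calc (V ^ 2 - 1) * V ^ (n + 2) * psiNat A (n + 2)
        = V * A * ((V ^ 2 - 1) * V ^ (n + 1) * psiNat A (n + 1)) -
            V ^ 2 * ((V ^ 2 - 1) * V ^ n * psiNat A n) := by rw [psiNat]; ring
      _ ≡ (V ^ 2 + 1) * (V * ((V ^ (n + 1)) ^ 2 - 1)) -
            V ^ 2 * (V * ((V ^ n) ^ 2 - 1)) [ZMOD m] := (hV.mul ih_succ).sub (ih.mul_left _)
      _ = V * ((V ^ (n + 2)) ^ 2 - 1) := by ring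

theorem sq_sub_one_mul_pow_mul_psi_modEq (A V : ℤ) (n : ℕ) :
    (V ^ 2 - 1) * V ^ n * psi A n ≡ V * ((V ^ n) ^ 2 - 1) [ZMOD V * A - V ^ 2 - 1] :=
  sq_sub_one_mul_pow_mul_psiNat_modEq (Int.modEq_iff_dvd.2 ⟨-1, by ring⟩) n

theorem dvd_sub_mul_mul_add_one_of_modEq {m V c x y : ℤ} (hm : IsCoprime m V)
    (hx : c * x ≡ V * (x ^ 2 - 1) [ZMOD m]) (hy : c * y ≡ V * (y ^ 2 - 1) [ZMOD m]) :
    m ∣ (x - y) * (y * x + 1) := by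
  have h : m ∣ y * (V * (x ^ 2 - 1) - c * x) - x * (V * (y ^ 2 - 1) - c * y) :=
    dvd_sub (hx.dvd.mul_left y) (hy.dvd.mul_left x)
  refine hm.dvd_of_dvd_mul_left (h.trans (dvd_of_eq ?_))
  ring

theorem isCoprime_mul_sub_sq_sub_one {R : Type*} [CommRing R] (a v : R) :
    IsCoprime (v * a - v ^ 2 - 1) v :=
  ⟨-1, a - v, by ring⟩

theorem eq_of_sub_mul_mul_add_one_eq_zero {R : Type*} [CommRing R] [NoZeroDivisors R] {x y : R}
    (hx : ¬IsUnit x) (h : (x - y) * (y * x + 1) = 0) : x = y := by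
  refine sub_eq_zero.1 ((mul_eq_zero.1 h).resolve_right fun hxy => hx ?_)
  exact IsUnit.of_mul_eq_one (-y) (by linear_combination -hxy)

section Bounds

variable {R : Type*} [CommRing R] [LinearOrder R] [IsStrictOrderedRing R] {x y a v K : R}

theorem abs_sub_mul_mul_add_one_le (hx : |x| ≤ K) (hy : |y| ≤ K) :
    |(x - y) * (y * x + 1)| ≤ (K + K) * (K * K + 1) := by
  have hK : 0 ≤ K := (abs_nonneg x).trans hx
  have hsub : |x - y| ≤ K + K := (abs_sub x y).trans (add_le_add hx hy)
  have hmul : |y * x + 1| ≤ K * K + 1 := by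
    refine (abs_add_le _ _).trans ?_
    rw [abs_mul, abs_one]
    gcongr
  rw [abs_mul]
  gcongr

theorem lt_abs_mul_sub_sq_sub_one (hv : 2 ≤ |v|) (hvK : |v| ≤ K) (ha : K ^ 4 ≤ |a|) :
    (K + K) * (K * K + 1) < |v * a - v ^ 2 - 1| := by
  have hK : 2 ≤ K := hv.trans hvK
  have hK4 : 0 ≤ K ^ 4 - K := sub_nonneg.2 (le_self_pow₀ (one_le_two.trans hK) four_ne_zero)
  have hcube : 4 * K ≤ K ^ 3 := by
    calc 4 * K = 2 ^ 2 * K := by ring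
      _ ≤ K ^ 2 * K := by gcongr
      _ = K ^ 3 := by ring
  have hquartic : 2 * K ^ 3 ≤ K ^ 4 := by
    rw [pow_succ' K 3]
    gcongr
  calc (K + K) * (K * K + 1) < 2 * (K ^ 4 - K) - 1 := by linarith
    _ ≤ |v| * (K ^ 4 - K) - 1 := by gcongr
    _ ≤ |v| * (|a| - |v|) - 1 := by gcongr
    _ = |v * a| - |v ^ 2 + 1| := by
        rw [abs_mul, abs_of_pos (by positivity : 0 < v ^ 2 + 1), ← sq_abs v]; ring
    _ ≤ |v * a - (v ^ 2 + 1)| := abs_sub_abs_le_abs_sub _ _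
    _ = |v * a - v ^ 2 - 1| := by rw [sub_sub]

theorem abs_sub_mul_mul_add_one_lt (hv : 2 ≤ |v|) (hvx : |v| ≤ |x|)
    (ha : max (y ^ 4) (x ^ 4) ≤ |a|) :
    |(x - y) * (y * x + 1)| < |v * a - v ^ 2 - 1| := by
  have hK : max |x| |y| ^ 4 ≤ |a| := by
    have heven : Even 4 := by decide
    rcases max_choice |x| |y| with h | h <;> rw [h, heven.pow_abs]
    · exact (le_max_right _ _).trans ha
    · exact (le_max_left _ _).trans ha
  exact (abs_sub_mul_mul_add_one_le (le_max_left _ _) (le_max_right _ _)).trans_lt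
    (lt_abs_mul_sub_sq_sub_one hv (hvx.trans (le_max_left _ _)) hK)

end Bounds

theorem power_of_two_via_lucas_general (V : ℤ) (hV : 2 ≤ |V|) (B : ℕ) (hB : 0 < B) :
    (∀ A W : ℤ, W = V ^ B →
        (V ^ 2 - 1) * W * psi A (B : ℤ) ≡ V * (W ^ 2 - 1) [ZMOD V * A - V ^ 2 - 1]) ∧
    (∀ A W : ℤ,
        (V ^ 2 - 1) * W * psi A (B : ℤ) ≡ V * (W ^ 2 - 1) [ZMOD V * A - V ^ 2 - 1] →
        max (W ^ 4) (V ^ (4 * B)) ≤ |A| → W = V ^ B) := by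
  refine ⟨fun A W hW => hW ▸ sq_sub_one_mul_pow_mul_psi_modEq A V B, fun A W hW hA => ?_⟩
  have hVB : |V| ≤ |V ^ B| := by
    rw [abs_pow]
    exact le_self_pow₀ (one_le_two.trans hV) hB.ne'
  have hdvd : V * A - V ^ 2 - 1 ∣ (V ^ B - W) * (W * V ^ B + 1) := by
    have hpow := sq_sub_one_mul_pow_mul_psi_modEq A V B
    rw [mul_right_comm] at hW hpow
    exact dvd_sub_mul_mul_add_one_of_modEq (isCoprime_mul_sub_sq_sub_one A V) hpow hW
  have hlt : |(V ^ B - W) * (W * V ^ B + 1)| < |V * A - V ^ 2 - 1| :=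
    abs_sub_mul_mul_add_one_lt hV hVB (by rwa [← pow_mul, mul_comm B])
  have hzero := Int.eq_zero_of_abs_lt_dvd ((abs_dvd _ _).2 hdvd) hlt
  have hunit : ¬IsUnit (V ^ B) := fun h => by
    have := Int.isUnit_iff_abs_eq.1 h
    lia
  exact (eq_of_sub_mul_mul_add_one_eq_zero hunit hzero).symm

/-- Fix `B > 0` and consider the congruence
`3·W·ψ_B(A) ≡ 2(W² − 1) (mod 2A − 5)`.
If `W = 2^B` the congruence holds for every integer `A`; conversely, if the
congruence holds and `|A| ≥ max{W⁴, 2^{4B}}`, then `W = 2^B`. -/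
theorem power_of_two_via_lucas (B : ℕ) (hB : 0 < B) :
    (∀ A W : ℤ, W = 2 ^ B →
        3 * W * psi A (B : ℤ) ≡ 2 * (W ^ 2 - 1) [ZMOD 2 * A - 5]) ∧
    (∀ A W : ℤ, 3 * W * psi A (B : ℤ) ≡ 2 * (W ^ 2 - 1) [ZMOD 2 * A - 5] →
        max (W ^ 4) (2 ^ (4 * B)) ≤ |A| → W = 2 ^ B) := by
  simpa [sub_sub] using power_of_two_via_lucas_general 2 (by norm_num) B hB
end

section
/- Let U, V, X be integers with V ≥ 1, X ≥ 1 and |U| ≥ 2X, and set ρ := (V+1)^{2X} / V^X (a rational number). Then |ψ_{2X+1}(U(V+1)) / ψ_{X+1}(U²V) − ρ| ≤ ρ · 2X / (|U|·V). -/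
/-!
Dividing `ψ_{n+1}(A)` by its leading term `A^n` leaves a quantity `e_n` that depends only on
`c = A⁻²` and satisfies `e_{n+2} = e_{n+1} - c * e_n`. For `0 ≤ c ≤ 1/4` it is positive, at most
`1`, at least `1 - n * c`, and decreasing both in `n` and in `c`, the latter because each ratio
`e_{n+1} / e_n` decreases in `c`. Now `ρ` is the quotient of the leading terms of
`ψ_{2X+1}(U(V+1))` and `ψ_{X+1}(U²V)`, so the quotient of these numbers is
`ρ * (e_{2X}(a) / e_X(b))` with `a = (U(V+1))⁻²` and `b = (U²V)⁻²`. Once `|U| ≥ 2` we have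
`b ≤ a ≤ 1/4`, and the two monotonicities give
`1 - 2X * a ≤ e_{2X}(a) ≤ e_{2X}(a) / e_X(b) ≤ 1`.
-/

/-- The Lucas sequence `ψ_{n+1}(A)` divided by `A ^ n`, as a function of `c = A⁻²`; equivalently,
the value at `1` of the Dickson polynomial of the second kind with parameter `c`. Taking `c` rather
than `A` as the parameter makes the sign of `A` irrelevant. -/
def scaledPsi {R : Type*} [CommRing R] (c : R) : ℕ → R
  | 0 => 1
  | 1 => 1
  | n + 2 => scaledPsi c (n + 1) - c * scaledPsi c n

theorem psiNat_succ_eq_pow_mul_scaledPsi {K : Type*} [Field K] {A : ℤ} (hA : (A : K) ≠ 0)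
    (n : ℕ) : (psiNat A (n + 1) : K) = A ^ n * scaledPsi ((A : K) ^ 2)⁻¹ n := by
  induction n using Nat.twoStepInduction with
  | zero => simp [psiNat, scaledPsi]
  | one => simp [psiNat, scaledPsi]
  | more n ih₀ ih₁ =>
    rw [psiNat, scaledPsi]
    push_cast
    rw [ih₀, ih₁]
    field_simp
    ring

theorem psi_natCast_succ_eq_pow_mul_scaledPsi {K : Type*} [Field K] {A : ℤ} (hA : (A : K) ≠ 0)
    (n : ℕ) : (psi A (n + 1) : K) = A ^ n * scaledPsi ((A : K) ^ 2)⁻¹ n :=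
  psiNat_succ_eq_pow_mul_scaledPsi hA n

section OrderedRing

variable {R : Type*} [CommRing R] [LinearOrder R] [IsStrictOrderedRing R] {a b c : R}

theorem scaledPsi_pos_and_le_two_mul (hc₀ : 0 ≤ c) (hc : 4 * c ≤ 1) (n : ℕ) :
    0 < scaledPsi c n ∧ scaledPsi c n ≤ 2 * scaledPsi c (n + 1) := by
  induction n with
  | zero => simp [scaledPsi]
  | succ n ih =>
    obtain ⟨hpos, hle⟩ := ih
    have hpos' : 0 < scaledPsi c (n + 1) := by linarith
    refine ⟨hpos', ?_⟩
    calc scaledPsi c (n + 1)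
        ≤ 2 * scaledPsi c (n + 1) - 4 * c * scaledPsi c (n + 1) := by
          linarith [mul_le_mul_of_nonneg_right hc hpos'.le]
      _ ≤ 2 * scaledPsi c (n + 1) - 2 * c * scaledPsi c n := by
          linarith [mul_le_mul_of_nonneg_left hle hc₀]
      _ = 2 * scaledPsi c (n + 2) := by rw [scaledPsi]; ring

theorem scaledPsi_pos (hc₀ : 0 ≤ c) (hc : 4 * c ≤ 1) (n : ℕ) : 0 < scaledPsi c n :=
  (scaledPsi_pos_and_le_two_mul hc₀ hc n).1

theorem scaledPsi_antitone (hc₀ : 0 ≤ c) (hc : 4 * c ≤ 1) : Antitone (scaledPsi c) := by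
  refine antitone_nat_of_succ_le fun n ↦ ?_
  cases n with
  | zero => simp [scaledPsi]
  | succ n =>
    rw [scaledPsi]
    exact sub_le_self _ (mul_nonneg hc₀ (scaledPsi_pos hc₀ hc n).le)

theorem scaledPsi_le_one (hc₀ : 0 ≤ c) (hc : 4 * c ≤ 1) (n : ℕ) : scaledPsi c n ≤ 1 := by
  simpa [scaledPsi] using scaledPsi_antitone hc₀ hc n.zero_le

theorem one_sub_mul_le_scaledPsi (hc₀ : 0 ≤ c) (hc : 4 * c ≤ 1) (n : ℕ) :
    1 - n * c ≤ scaledPsi c n := by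
  induction n using Nat.twoStepInduction with
  | zero => simp [scaledPsi]
  | one => simpa [scaledPsi] using hc₀
  | more n _ ih =>
    have hle : c * scaledPsi c n ≤ c := mul_le_of_le_one_right hc₀ (scaledPsi_le_one hc₀ hc n)
    rw [scaledPsi]
    push_cast at ih ⊢
    linarith

theorem scaledPsi_succ_mul_le_scaledPsi_succ_mul (hb : 0 ≤ b) (hba : b ≤ a) (ha : 4 * a ≤ 1)
    (n : ℕ) :
    scaledPsi a (n + 1) * scaledPsi b n ≤ scaledPsi b (n + 1) * scaledPsi a n := by
  induction n with
  | zero => simp [scaledPsi]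
  | succ n ih =>
    have hpos : 0 ≤ scaledPsi b (n + 1) * scaledPsi a n :=
      mul_nonneg (scaledPsi_pos hb (by linarith) _).le (scaledPsi_pos (hb.trans hba) ha _).le
    have hmul : b * (scaledPsi a (n + 1) * scaledPsi b n) ≤
        a * (scaledPsi b (n + 1) * scaledPsi a n) :=
      (mul_le_mul_of_nonneg_left ih hb).trans (mul_le_mul_of_nonneg_right hba hpos)
    simp only [scaledPsi]
    linarith

theorem scaledPsi_le_scaledPsi_of_le (hb : 0 ≤ b) (hba : b ≤ a) (ha : 4 * a ≤ 1) (n : ℕ) :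
    scaledPsi a n ≤ scaledPsi b n := by
  induction n with
  | zero => simp [scaledPsi]
  | succ n ih =>
    have hb' : 4 * b ≤ 1 := by linarith
    refine le_of_mul_le_mul_right ?_ (scaledPsi_pos hb hb' n)
    calc scaledPsi a (n + 1) * scaledPsi b n
        ≤ scaledPsi b (n + 1) * scaledPsi a n :=
          scaledPsi_succ_mul_le_scaledPsi_succ_mul hb hba ha n
      _ ≤ scaledPsi b (n + 1) * scaledPsi b n :=
          mul_le_mul_of_nonneg_left ih (scaledPsi_pos hb hb' _).le

end OrderedRing

theorem abs_scaledPsi_div_sub_one_le {K : Type*} [Field K] [LinearOrder K] [IsStrictOrderedRing K]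
    {a b : K} (hb : 0 ≤ b) (hba : b ≤ a) (ha : 4 * a ≤ 1) {m n : ℕ} (hnm : n ≤ m) :
    |scaledPsi a m / scaledPsi b n - 1| ≤ m * a := by
  have ha₀ : 0 ≤ a := hb.trans hba
  have hb' : 4 * b ≤ 1 := by linarith
  have hbn : 0 < scaledPsi b n := scaledPsi_pos hb hb' n
  have hle_one : scaledPsi a m / scaledPsi b n ≤ 1 := (div_le_one hbn).2 <|
    (scaledPsi_antitone ha₀ ha hnm).trans (scaledPsi_le_scaledPsi_of_le hb hba ha n)
  have hle_div : 1 - m * a ≤ scaledPsi a m / scaledPsi b n :=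
    (one_sub_mul_le_scaledPsi ha₀ ha m).trans <|
      le_div_self (scaledPsi_pos ha₀ ha m).le hbn (scaledPsi_le_one hb hb' n)
  rw [abs_sub_comm, abs_of_nonneg (sub_nonneg.2 hle_one)]
  linarith

theorem abs_psi_div_psi_sub_pow_div_pow_le {K : Type*} [Field K] [LinearOrder K]
    [IsStrictOrderedRing K] {A B : ℤ} (hA : 2 ≤ |A|) (hAB : |A| ≤ |B|) {m n : ℕ} (hnm : n ≤ m) :
    |(psi A (m + 1) : K) / psi B (n + 1) - (A : K) ^ m / (B : K) ^ n| ≤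
      |(A : K) ^ m / (B : K) ^ n| * (m / (A : K) ^ 2) := by
  have hA' : (2 : K) ≤ |(A : K)| := mod_cast hA
  have hAB' : |(A : K)| ≤ |(B : K)| := mod_cast hAB
  have hA₀ : (A : K) ≠ 0 := abs_pos.1 (by linarith)
  have hB₀ : (B : K) ≠ 0 := abs_pos.1 (by linarith)
  have hinv : ((B : K) ^ 2)⁻¹ ≤ ((A : K) ^ 2)⁻¹ := inv_anti₀ (by positivity) (sq_le_sq.2 hAB')
  have hquarter : 4 * ((A : K) ^ 2)⁻¹ ≤ 1 :=
    mul_inv_le_one_of_le₀ (by rw [← sq_abs]; nlinarith) (sq_nonneg _)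
  rw [psi_natCast_succ_eq_pow_mul_scaledPsi hA₀, psi_natCast_succ_eq_pow_mul_scaledPsi hB₀,
    mul_div_mul_comm, ← mul_sub_one, abs_mul, div_eq_mul_inv (m : K)]
  gcongr
  exact abs_scaledPsi_div_sub_one_le (by positivity) hinv hquarter hnm

theorem psi_ratio_approx_general (U V : ℤ) (X : ℕ) (hV : 1 ≤ V) (hU : 2 ≤ |U|) :
    |(psi (U * (V + 1)) (2 * (X : ℤ) + 1) : ℚ) / (psi (U ^ 2 * V) ((X : ℤ) + 1) : ℚ)
        - ((V : ℚ) + 1) ^ (2 * X) / (V : ℚ) ^ X|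
      ≤ ((V : ℚ) + 1) ^ (2 * X) / (V : ℚ) ^ X * (2 * (X : ℚ)) / (|(U : ℚ)| * (V : ℚ)) := by
  have hA : |U * (V + 1)| = |U| * (V + 1) := by rw [abs_mul, abs_of_pos (by lia : 0 < V + 1)]
  have hB : |U ^ 2 * V| = |U| * (|U| * V) := by
    rw [abs_mul, abs_pow, abs_of_pos (by lia : 0 < V), sq, mul_assoc]
  have hA_two : 2 ≤ |U * (V + 1)| := by rw [hA]; nlinarith
  have hAB : |U * (V + 1)| ≤ |U ^ 2 * V| := by rw [hA, hB]; gcongr; nlinarith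
  have hUV : |U| * V ≤ (U * (V + 1)) ^ 2 := by rw [← sq_abs, hA]; nlinarith
  have hUV' : |(U : ℚ)| * V ≤ (U * (V + 1)) ^ 2 := mod_cast hUV
  have hU₀ : 0 < |(U : ℚ)| := mod_cast (by lia : 0 < |U|)
  have : (0 : ℚ) < V := mod_cast hV
  have hρ : ((U : ℚ) * (V + 1)) ^ (2 * X) / ((U : ℚ) ^ 2 * V) ^ X =
      ((V : ℚ) + 1) ^ (2 * X) / (V : ℚ) ^ X := by
    rw [mul_pow, mul_pow, ← pow_mul, mul_div_mul_left _ _ (pow_ne_zero _ (abs_pos.1 hU₀))]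
  have happrox := abs_psi_div_psi_sub_pow_div_pow_le (K := ℚ) hA_two hAB (by lia : X ≤ 2 * X)
  push_cast at happrox
  rw [hρ, abs_of_nonneg (by positivity : (0 : ℚ) ≤ (V + 1) ^ (2 * X) / V ^ X)] at happrox
  rw [mul_div_assoc]
  exact happrox.trans (by gcongr)

/-- Let `U, V, X` be integers with `V ≥ 1`, `X ≥ 1` and `|U| ≥ 2X`, and set
`ρ := (V+1)^{2X} / V^X ∈ ℚ`.  Then
`|ψ_{2X+1}(U(V+1)) / ψ_{X+1}(U²V) − ρ| ≤ ρ · 2X / (|U|·V)`. -/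
theorem psi_ratio_approx (U V : ℤ) (X : ℕ) (hV : 1 ≤ V) (hX : 1 ≤ X)
    (hU : 2 * (X : ℤ) ≤ |U|) :
    |(psi (U * (V + 1)) (2 * (X : ℤ) + 1) : ℚ) / (psi (U ^ 2 * V) ((X : ℤ) + 1) : ℚ)
        - ((V : ℚ) + 1) ^ (2 * X) / (V : ℚ) ^ X|
      ≤ ((V : ℚ) + 1) ^ (2 * X) / (V : ℚ) ^ X * (2 * (X : ℚ)) / (|(U : ℚ)| * (V : ℚ)) :=
  psi_ratio_approx_general U V X hV (by lia)
end

section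
/- Let q > 0 and let A₁, …, A_q, S, T, R be integers with S ≠ 0. Set X_q := 1 + A₁² + ⋯ + A_q² and define M_q(A₁, …, A_q, S, T, R, n) := ∏_{(ε₁,…,ε_q) ∈ {−1,1}^q} (S²n + T² − S²(2R − 1)(T² + X_q^q + Σ_{j=1}^q ε_j·√(A_j)·X_q^{j−1})), where √(A_j) denotes a fixed complex square root of A_j (the product is independent of the choices and is an integer-valued polynomial expression in the A_j, S, T, R, n). Then the following are equivalent: (i) S divides T, R > 0, and each of A₁, …, A_q is a perfect square; (ii) there exists n ∈ ℕ with M_q(A₁, …, A_q, S, T, R, n) = 0. -/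
/-- `X_q := 1 + A₁² + ⋯ + A_q²` (as a complex number). -/
noncomputable def Xq (q : ℕ) (A : Fin q → ℤ) : ℂ := 1 + ∑ j, (A j : ℂ) ^ 2

/-- The Matiyasevich–Robinson relation-combining expression
`M_q(A₁, …, A_q, S, T, R, n)`: the product over all sign vectors
`(ε₁, …, ε_q) ∈ {−1, 1}^q` (encoded by `ε : Fin q → Bool`) of
`S²n + T² − S²(2R − 1)(T² + X_q^q + ∑_j ε_j·√(A_j)·X_q^{j−1})`,
where `√(A_j)` is the complex square root `(A_j)^{1/2}`. -/
noncomputable def Mq (q : ℕ) (A : Fin q → ℤ) (S T R : ℤ) (n : ℕ) : ℂ :=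
  ∏ ε : Fin q → Bool,
    ((S : ℂ) ^ 2 * (n : ℂ) + (T : ℂ) ^ 2 - (S : ℂ) ^ 2 * (2 * (R : ℂ) - 1) *
      ((T : ℂ) ^ 2 + (Xq q A) ^ q +
        ∑ j : Fin q, (if ε j then 1 else -1) * (A j : ℂ) ^ ((1 : ℂ) / 2)
          * (Xq q A) ^ (j : ℕ)))

/-!
A factor of `M_q` vanishes exactly when `S²n + T² = S²(2R − 1)(T² + W)` with
`W = X^q + ∑ sⱼ X^(j-1)` for some choice of square roots `sⱼ` of the `Aⱼ`. The base
`X = 1 + ∑ Aⱼ²` is so large that the `sⱼ` behave like digits: each is zero or of absolute value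
between `1` and `X - 1`, so such an expansion in base `X` is zero only if all its digits are, and
`W > 0` as soon as the `sⱼ` are integers.

The equation forces `∑ sⱼ X^(j-1)` to be rational. A Galois automorphism `σ` sends each `sⱼ` to
`± sⱼ`, so `sⱼ - σ sⱼ` is `0` or `2 sⱼ`; halving these differences gives an expansion of `0` with
small digits, whence `σ sⱼ = sⱼ`. So every `sⱼ` is rational, hence an integer. What remains is
elementary: the equation gives `S² ∣ T²`, and `W > 0` turns the sign of its two sides into `R > 0`.
-/

section DigitExpansion

theorem norm_sum_mul_pow_le {R : Type*} [SeminormedRing R] [NormOneClass R] {q : ℕ} {x : R}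
    {c : Fin q → R} (hc : ∀ j, ‖c j‖ ≤ ‖x‖ - 1) :
    ‖∑ j, c j * x ^ (j : ℕ)‖ ≤ ‖x‖ ^ q - 1 := by
  have hterm (j : Fin q) : ‖c j * x ^ (j : ℕ)‖ ≤ (‖x‖ - 1) * ‖x‖ ^ (j : ℕ) :=
    norm_mul_le_of_le (hc j) (norm_pow_le x j)
  calc ‖∑ j, c j * x ^ (j : ℕ)‖ ≤ ∑ j : Fin q, (‖x‖ - 1) * ‖x‖ ^ (j : ℕ) :=
        norm_sum_le_of_le _ fun j _ => hterm j
    _ = ‖x‖ ^ q - 1 := by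
        rw [← Finset.mul_sum, Fin.sum_univ_eq_sum_range (‖x‖ ^ ·), mul_geom_sum]

theorem eq_zero_of_sum_mul_pow_eq_zero {R : Type*} [NormedRing R] [NormMulClass R]
    [NormOneClass R] {q : ℕ} {x : R} {c : Fin q → R} (hc : ∀ j, ‖c j‖ ≤ ‖x‖ - 1)
    (hc' : ∀ j, c j ≠ 0 → 1 ≤ ‖c j‖) (hsum : ∑ j, c j * x ^ (j : ℕ) = 0) (j : Fin q) :
    c j = 0 := by
  induction q with
  | zero => exact j.elim0
  | succ q ih =>
    rw [Fin.sum_univ_castSucc] at hsum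
    simp only [Fin.val_castSucc, Fin.val_last] at hsum
    have hlower : ‖c (Fin.last q)‖ * ‖x‖ ^ q ≤ ‖x‖ ^ q - 1 := by
      rw [← norm_pow, ← norm_mul, eq_neg_of_add_eq_zero_right hsum, norm_neg, norm_pow]
      exact norm_sum_mul_pow_le fun i => hc i.castSucc
    have hlast : c (Fin.last q) = 0 := by
      by_contra hne
      have := le_mul_of_one_le_left (pow_nonneg (norm_nonneg x) q) (hc' _ hne)
      linarith
    rw [hlast, zero_mul, add_zero] at hsum
    cases j using Fin.lastCases with
    | last => exact hlast
    | cast i => exact ih (fun i => hc i.castSucc) (fun i => hc' i.castSucc) hsum i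

theorem pow_add_sum_mul_pow_pos {R : Type*} [Ring R] [PartialOrder R] [IsStrictOrderedRing R]
    {q : ℕ} {x : R} {c : Fin q → R} (hx : 0 ≤ x) (hc : ∀ j, 1 - x ≤ c j) :
    0 < x ^ q + ∑ j, c j * x ^ (j : ℕ) := by
  calc (0 : R) < 1 := one_pos
    _ = x ^ q + ∑ j : Fin q, (1 - x) * x ^ (j : ℕ) := by
        rw [← Finset.mul_sum, Fin.sum_univ_eq_sum_range (x ^ ·), mul_neg_geom_sum,
          add_sub_cancel]
    _ ≤ x ^ q + ∑ j, c j * x ^ (j : ℕ) := by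
        gcongr with j
        exact hc j

end DigitExpansion

section GaloisDescent

variable {F E : Type*} [Field F] [NormedField E] [Algebra F E] {q : ℕ} {x : F} {s : Fin q → E}

theorem mem_range_algebraMap_of_sum_mul_pow_mem_of_isGalois [IsGalois F E] [NeZero (2 : E)]
    (hs : ∀ j, s j ^ 2 ∈ Set.range (algebraMap F E))
    (hle : ∀ j, ‖s j‖ ≤ ‖algebraMap F E x‖ - 1) (hge : ∀ j, s j ≠ 0 → 1 ≤ ‖s j‖)
    (hsum : ∑ j, s j * algebraMap F E x ^ (j : ℕ) ∈ Set.range (algebraMap F E)) (j : Fin q) :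
    s j ∈ Set.range (algebraMap F E) := by
  rw [InfiniteGalois.mem_range_algebraMap_iff_fixed] at hsum ⊢
  intro σ
  have hσs (i : Fin q) : σ (s i) = s i ∨ σ (s i) = -s i := by
    rw [← sq_eq_sq_iff_eq_or_eq_neg, ← map_pow]
    exact (InfiniteGalois.mem_range_algebraMap_iff_fixed _).mp (hs i) σ
  have hdigit (i : Fin q) : (s i - σ (s i)) / 2 = 0 ∨ (s i - σ (s i)) / 2 = s i := by
    rcases hσs i with h | h
    · exact .inl (by rw [h, sub_self, zero_div])
    · exact .inr (by rw [h, sub_neg_eq_add, add_self_div_two])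
  have hexpansion : ∑ i, (s i - σ (s i)) / 2 * algebraMap F E x ^ (i : ℕ) = 0 := by
    have hfixed := hsum σ
    simp only [map_sum, map_mul, map_pow, AlgEquiv.commutes] at hfixed
    simp only [div_mul_eq_mul_div, sub_mul, ← Finset.sum_div, Finset.sum_sub_distrib, hfixed,
      sub_self, zero_div]
  have hzero : (s j - σ (s j)) / 2 = 0 := by
    refine eq_zero_of_sum_mul_pow_eq_zero (fun i => ?_) (fun i hi => ?_) hexpansion j
    · rcases hdigit i with h | h <;> rw [h]
      · exact norm_zero.trans_le ((norm_nonneg _).trans (hle i))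
      · exact hle i
    · have h := (hdigit i).resolve_left hi
      rw [h] at hi ⊢
      exact hge i hi
  exact (sub_eq_zero.mp ((div_eq_zero_iff.mp hzero).resolve_right two_ne_zero)).symm

theorem mem_range_algebraMap_of_sum_mul_pow_mem [CharZero F] [IsAlgClosed E]
    (hs : ∀ j, s j ^ 2 ∈ Set.range (algebraMap F E))
    (hle : ∀ j, ‖s j‖ ≤ ‖algebraMap F E x‖ - 1) (hge : ∀ j, s j ≠ 0 → 1 ≤ ‖s j‖)
    (hsum : ∑ j, s j * algebraMap F E x ^ (j : ℕ) ∈ Set.range (algebraMap F E)) (j : Fin q) :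
    s j ∈ Set.range (algebraMap F E) := by
  let K := algebraicClosure F E
  have : CharZero K := charZero_of_injective_algebraMap (algebraMap F K).injective
  have hsK (i : Fin q) : s i ∈ K := by
    obtain ⟨a, ha⟩ := hs i
    exact mem_algebraicClosure_iff.mpr <|
      (IsIntegral.of_pow two_pos (ha ▸ isIntegral_algebraMap)).isAlgebraic
  have mem_range_iff (z : K) :
      z ∈ Set.range (algebraMap F K) ↔ (z : E) ∈ Set.range (algebraMap F E) :=
    exists_congr fun _ => Subtype.ext_iff
  rw [← mem_range_iff ⟨s j, hsK j⟩]
  refine mem_range_algebraMap_of_sum_mul_pow_mem_of_isGalois (x := x) (s := fun i => ⟨s i, hsK i⟩)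
    (fun i => (mem_range_iff _).mpr (hs i)) hle (fun i hi => hge i ?_) ((mem_range_iff _).mpr ?_) j
  · exact fun h => hi (Subtype.ext h)
  · simpa using hsum

end GaloisDescent

section ComplexSquareRoots

variable {t : ℂ} {a : ℤ}

theorem norm_sq_of_sq_eq_intCast (h : t ^ 2 = a) : ‖t‖ ^ 2 = |(a : ℝ)| := by
  rw [← norm_pow, h, Complex.norm_intCast]

theorem one_le_norm_of_sq_eq_intCast (h : t ^ 2 = a) (ht : t ≠ 0) : 1 ≤ ‖t‖ := by
  have ha : a ≠ 0 := by
    rintro rfl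
    exact ht (by simpa using h)
  rw [← one_le_sq_iff₀ (norm_nonneg t), norm_sq_of_sq_eq_intCast h]
  exact_mod_cast Int.one_le_abs ha

theorem norm_le_sq_of_sq_eq_intCast (h : t ^ 2 = a) : ‖t‖ ≤ (a : ℝ) ^ 2 := by
  rcases eq_or_ne t 0 with rfl | ht
  · simpa using sq_nonneg (a : ℝ)
  · calc ‖t‖ ≤ ‖t‖ ^ 4 := le_self_pow₀ (one_le_norm_of_sq_eq_intCast h ht) four_ne_zero
      _ = (‖t‖ ^ 2) ^ 2 := by ring
      _ = (a : ℝ) ^ 2 := by rw [norm_sq_of_sq_eq_intCast h, sq_abs]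

theorem exists_intCast_eq_of_sum_mul_pow_mem_range {q : ℕ} {A : Fin q → ℤ} {x : ℤ}
    {s : Fin q → ℂ} (hs : ∀ j, s j ^ 2 = A j) (hx : ∀ j, A j ^ 2 ≤ x - 1)
    (hsum : ∑ j, s j * (x : ℂ) ^ (j : ℕ) ∈ Set.range ((↑) : ℚ → ℂ)) (j : Fin q) :
    ∃ m : ℤ, (m : ℂ) = s j := by
  obtain ⟨r, hr⟩ : s j ∈ Set.range (algebraMap ℚ ℂ) := by
    refine mem_range_algebraMap_of_sum_mul_pow_mem (x := (x : ℚ))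
      (fun i => ⟨A i, by simp [hs i]⟩) (fun i => ?_)
      (fun i => one_le_norm_of_sq_eq_intCast (hs i)) (by simpa using hsum) j
    have hxi : (A i : ℝ) ^ 2 ≤ x - 1 := by exact_mod_cast hx i
    rw [map_intCast, Complex.norm_intCast]
    linarith [norm_le_sq_of_sq_eq_intCast (hs i), le_abs_self (x : ℝ)]
  have hr2 : r ^ 2 = (A j : ℚ) := by
    have h := hs j
    rw [← hr, eq_ratCast] at h
    exact_mod_cast h
  have hint : IsIntegral ℤ (r ^ 2) := hr2 ▸ isIntegral_algebraMap (x := A j)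
  obtain ⟨m, rfl⟩ := IsIntegrallyClosed.exists_algebraMap_eq_of_isIntegral_pow two_pos hint
  exact ⟨m, by simpa using hr⟩

end ComplexSquareRoots

theorem forall_sq_eq_sq_iff_exists_sign {ι R : Type*} [CommRing R] [NoZeroDivisors R]
    {s r : ι → R} :
    (∀ j, s j ^ 2 = r j ^ 2) ↔ ∃ ε : ι → Bool, ∀ j, s j = (if ε j then 1 else -1) * r j := by
  rw [← Classical.skolem (p := fun j (b : Bool) => s j = (if b then 1 else -1) * r j)]
  simp [sq_eq_sq_iff_eq_or_eq_neg, or_comm]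

theorem exists_nat_sq_mul_add_sq_eq_iff {S T R W : ℤ} (hS : S ≠ 0) (hW : 0 < W) :
    (∃ n : ℕ, S ^ 2 * n + T ^ 2 = S ^ 2 * (2 * R - 1) * (T ^ 2 + W)) ↔ S ∣ T ∧ 0 < R := by
  constructor
  · rintro ⟨n, hn⟩
    have hdvd : S ^ 2 ∣ T ^ 2 := ⟨(2 * R - 1) * (T ^ 2 + W) - n, by linear_combination hn⟩
    have hnonneg : 0 ≤ S ^ 2 * (T ^ 2 + W) * (2 * R - 1) := by
      rw [mul_right_comm, ← hn]
      positivity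
    have hR : 0 ≤ 2 * R - 1 := nonneg_of_mul_nonneg_right hnonneg (by positivity)
    exact ⟨(Int.pow_dvd_pow_iff two_ne_zero).mp hdvd, by omega⟩
  · rintro ⟨⟨U, rfl⟩, hR⟩
    have hU : U ^ 2 ≤ (S * U) ^ 2 := by
      rw [mul_pow]
      exact le_mul_of_one_le_left (sq_nonneg U) (Order.one_le_iff_pos.mpr (by positivity))
    have hpos : 0 ≤ (S * U) ^ 2 + W := by positivity
    have hle : (S * U) ^ 2 + W ≤ (2 * R - 1) * ((S * U) ^ 2 + W) :=
      le_mul_of_one_le_left hpos (by omega)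
    lift (2 * R - 1) * ((S * U) ^ 2 + W) - U ^ 2 to ℕ using by linarith with n hn
    exact ⟨n, by rw [hn]; ring⟩

/-- The integer `X_q = 1 + A₁² + ⋯ + A_q²`, of which `Xq` is the complex version; the base of the
digit expansions. -/
def intXq {q : ℕ} (A : Fin q → ℤ) : ℤ := 1 + ∑ j, A j ^ 2

section RelationCombining

variable {q : ℕ} {A : Fin q → ℤ}

theorem Xq_eq_intCast : Xq q A = intXq A := by
  simp [Xq, intXq]

theorem sq_le_intXq_sub_one (j : Fin q) : A j ^ 2 ≤ intXq A - 1 := by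
  rw [intXq, add_sub_cancel_left]
  exact Finset.single_le_sum (fun i _ => sq_nonneg (A i)) (Finset.mem_univ j)

theorem intXq_pow_add_sum_mul_pow_pos {m : Fin q → ℤ} (hm : ∀ j, m j ^ 2 = A j) :
    0 < intXq A ^ q + ∑ j, m j * intXq A ^ (j : ℕ) := by
  refine pow_add_sum_mul_pow_pos (by unfold intXq; positivity) fun j => ?_
  have hneg : -m j ≤ intXq A - 1 :=
    calc -m j ≤ (-m j) ^ 2 := Int.le_self_sq _
      _ = A j := by rw [neg_sq, hm j]
      _ ≤ A j ^ 2 := Int.le_self_sq _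
      _ ≤ intXq A - 1 := sq_le_intXq_sub_one j
  linarith

variable {S T R : ℤ} {n : ℕ}

theorem Mq_eq_zero_iff :
    Mq q A S T R n = 0 ↔ ∃ s : Fin q → ℂ, (∀ j, s j ^ 2 = A j) ∧
      (S : ℂ) ^ 2 * n + (T : ℂ) ^ 2 = (S : ℂ) ^ 2 * (2 * R - 1) *
        ((T : ℂ) ^ 2 + ((intXq A : ℂ) ^ q + ∑ j, s j * (intXq A : ℂ) ^ (j : ℕ))) := by
  have hsqrt (j : Fin q) : ((A j : ℂ) ^ ((1 : ℂ) / 2)) ^ 2 = A j := by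
    simp
  have hroots (s : Fin q → ℂ) : (∀ j, s j ^ 2 = A j) ↔
      ∃ ε : Fin q → Bool, s = fun j => (if ε j then 1 else -1) * (A j : ℂ) ^ ((1 : ℂ) / 2) := by
    simp_rw [funext_iff, ← forall_sq_eq_sq_iff_exists_sign, hsqrt]
  simp only [hroots, Mq, Finset.prod_eq_zero_iff, Finset.mem_univ, true_and, sub_eq_zero, add_assoc,
    Xq_eq_intCast]
  constructor
  · rintro ⟨ε, h⟩
    exact ⟨_, ⟨ε, rfl⟩, h⟩
  · rintro ⟨_, ⟨ε, rfl⟩, h⟩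
    exact ⟨ε, h⟩

theorem Mq_eq_zero_iff_exists_int (hS : S ≠ 0) :
    Mq q A S T R n = 0 ↔ ∃ m : Fin q → ℤ, (∀ j, m j ^ 2 = A j) ∧
      S ^ 2 * n + T ^ 2 = S ^ 2 * (2 * R - 1) *
        (T ^ 2 + (intXq A ^ q + ∑ j, m j * intXq A ^ (j : ℕ))) := by
  rw [Mq_eq_zero_iff]
  constructor
  · rintro ⟨s, hs, heq⟩
    have hrat : ∑ j, s j * (intXq A : ℂ) ^ (j : ℕ) ∈ Set.range ((↑) : ℚ → ℂ) := by
      have hcoeff : (S : ℂ) ^ 2 * (2 * R - 1) ≠ 0 := by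
        have hR : 2 * R - 1 ≠ 0 := by omega
        exact_mod_cast mul_ne_zero (pow_ne_zero 2 hS) hR
      refine ⟨(S ^ 2 * n + T ^ 2) / (S ^ 2 * (2 * R - 1)) - T ^ 2 - intXq A ^ q, ?_⟩
      push_cast
      rw [heq, mul_div_cancel_left₀ _ hcoeff]
      ring
    choose m hm using exists_intCast_eq_of_sum_mul_pow_mem_range hs sq_le_intXq_sub_one hrat
    simp only [← hm] at hs heq
    exact ⟨m, by exact_mod_cast hs, by exact_mod_cast heq⟩
  · rintro ⟨m, hm, heq⟩
    have hmC (j : Fin q) : (m j : ℂ) ^ 2 = A j := by exact_mod_cast hm j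
    exact ⟨fun j => m j, hmC, by beta_reduce; exact_mod_cast heq⟩

end RelationCombining

/-- **Relation combining (Matiyasevich–Robinson).** For `q > 0` and integers
`A₁, …, A_q, S, T, R` with `S ≠ 0`: `S ∣ T`, `R > 0` and all `A_j` perfect
squares hold simultaneously iff `M_q(A₁, …, A_q, S, T, R, n) = 0` for some
`n ∈ ℕ`. -/
theorem relation_combining (q : ℕ) (hq : 0 < q) (A : Fin q → ℤ) (S T R : ℤ)
    (hS : S ≠ 0) :
    (S ∣ T ∧ 0 < R ∧ ∀ j, ∃ m : ℤ, A j = m ^ 2) ↔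
      ∃ n : ℕ, Mq q A S T R n = 0 := by
  simp_rw [Mq_eq_zero_iff_exists_int hS]
  constructor
  · rintro ⟨hST, hR, hA⟩
    choose m hm using hA
    have hsq (j : Fin q) : m j ^ 2 = A j := (hm j).symm
    have hW := intXq_pow_add_sum_mul_pow_pos hsq
    obtain ⟨n, hn⟩ := (exists_nat_sq_mul_add_sq_eq_iff hS hW).mpr ⟨hST, hR⟩
    exact ⟨n, m, hsq, hn⟩
  · rintro ⟨n, m, hsq, hn⟩
    have hW := intXq_pow_add_sum_mul_pow_pos hsq
    obtain ⟨hST, hR⟩ := (exists_nat_sq_mul_add_sq_eq_iff hS hW).mp ⟨n, hn⟩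
    exact ⟨hST, hR, fun j => ⟨m j, (hsq j).symm⟩⟩
end

section
/- Given integers X, Y, b, g, h, k, l, w, x, y, define U := 2lXY, V := 4gwY, A := U(V+1), B := 2X+1, C := B + (A−2)h, D := (A²−4)C² + 4, E := C²Dx, F := 4(A²−4)E² + 1, G := 1 + CDF − 2(A+2)(A−2)²E², H := C + BF + (2y−1)CF, I := (G²−1)H² + 1, J := X + 1 + k(U²V − 2). Consider the relations: (R1) D·F·I is a perfect square; (R2) (U⁴V² − 4)J² + 4 is a perfect square; (R3) (2A − 5) divides 3bwC − 2(b²w² − 1); (R4) (C/J − lY)² < 1/(16g²); (R5) (C/J − lY)² < 1/4 (the inequalities in ℚ, with J ≠ 0). Then, for integers b ≥ 0, X ≥ 3b, Y ≥ max{b, 2⁸} and g ≥ 1, the following are equivalent: (1) b is a power of 2 and Y divides C(2X, X); (2) there exist integers h, k, l, w, x, y ≥ b satisfying (R1), (R2), (R3) and (R4); (0a) there exist integers h, k, l, w, x, y with l·x ≠ 0 satisfying (R1), (R2), (R3) and (R5). Moreover, the implication (1) ⟹ (2) already holds under the weaker hypothesis X ≥ b. -/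
namespace BridgeTheorem

def U (X Y l : ℤ) : ℤ := 2 * l * X * Y
def V (Y g w : ℤ) : ℤ := 4 * g * w * Y
def A (X Y g l w : ℤ) : ℤ := U X Y l * (V Y g w + 1)
def B (X : ℤ) : ℤ := 2 * X + 1
def C (X Y g h l w : ℤ) : ℤ := B X + (A X Y g l w - 2) * h
def D (X Y g h l w : ℤ) : ℤ := ((A X Y g l w) ^ 2 - 4) * (C X Y g h l w) ^ 2 + 4
def E (X Y g h l w x : ℤ) : ℤ := (C X Y g h l w) ^ 2 * D X Y g h l w * x
def F (X Y g h l w x : ℤ) : ℤ :=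
  4 * ((A X Y g l w) ^ 2 - 4) * (E X Y g h l w x) ^ 2 + 1
def G (X Y g h l w x : ℤ) : ℤ :=
  1 + C X Y g h l w * D X Y g h l w * F X Y g h l w x
    - 2 * (A X Y g l w + 2) * (A X Y g l w - 2) ^ 2 * (E X Y g h l w x) ^ 2
def H (X Y g h l w x y : ℤ) : ℤ :=
  C X Y g h l w + B X * F X Y g h l w x + (2 * y - 1) * C X Y g h l w * F X Y g h l w x
def I (X Y g h l w x y : ℤ) : ℤ :=
  ((G X Y g h l w x) ^ 2 - 1) * (H X Y g h l w x y) ^ 2 + 1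
def J (X Y g k l w : ℤ) : ℤ := X + 1 + k * ((U X Y l) ^ 2 * V Y g w - 2)

/-- (R1): `D·F·I` is a perfect square. -/
def R1 (X Y g h l w x y : ℤ) : Prop :=
  ∃ m : ℤ, D X Y g h l w * F X Y g h l w x * I X Y g h l w x y = m ^ 2

/-- (R2): `(U⁴V² − 4)J² + 4` is a perfect square. -/
def R2 (X Y g k l w : ℤ) : Prop :=
  ∃ m : ℤ, ((U X Y l) ^ 4 * (V Y g w) ^ 2 - 4) * (J X Y g k l w) ^ 2 + 4 = m ^ 2

/-- (R3): `(2A − 5) ∣ 3bwC − 2(b²w² − 1)`. -/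
def R3 (b X Y g h l w : ℤ) : Prop :=
  (2 * A X Y g l w - 5) ∣ (3 * b * w * C X Y g h l w - 2 * (b ^ 2 * w ^ 2 - 1))

/-- (R4): `(C/J − lY)² < 1/(16g²)` in `ℚ`, with `J ≠ 0`. -/
def R4 (X Y g h k l w : ℤ) : Prop :=
  J X Y g k l w ≠ 0 ∧
    ((C X Y g h l w : ℚ) / (J X Y g k l w : ℚ) - (l : ℚ) * (Y : ℚ)) ^ 2
      < 1 / (16 * (g : ℚ) ^ 2)

/-- (R5): `(C/J − lY)² < 1/4` in `ℚ`, with `J ≠ 0`. -/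
def R5 (X Y g h k l w : ℤ) : Prop :=
  J X Y g k l w ≠ 0 ∧
    ((C X Y g h l w : ℚ) / (J X Y g k l w : ℚ) - (l : ℚ) * (Y : ℚ)) ^ 2 < 1 / 4

/-- (1): `b` is a power of 2 and `Y ∣ C(2X, X)`. -/
def Cond1 (b X Y : ℤ) : Prop :=
  (∃ k : ℕ, b = 2 ^ k) ∧ Y ∣ (Nat.choose (2 * X.toNat) X.toNat : ℤ)

/-- (2): there are integers `h, k, l, w, x, y ≥ b` satisfying (R1)–(R4). -/
def Cond2 (b X Y g : ℤ) : Prop :=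
  ∃ h k l w x y : ℤ, b ≤ h ∧ b ≤ k ∧ b ≤ l ∧ b ≤ w ∧ b ≤ x ∧ b ≤ y ∧
    R1 X Y g h l w x y ∧ R2 X Y g k l w ∧ R3 b X Y g h l w ∧ R4 X Y g h k l w

/-- (0a): there are integers `h, k, l, w, x, y` with `l·x ≠ 0` satisfying
(R1), (R2), (R3) and (R5). -/
def Cond0a (b X Y g : ℤ) : Prop :=
  ∃ h k l w x y : ℤ, l * x ≠ 0 ∧
    R1 X Y g h l w x y ∧ R2 X Y g k l w ∧ R3 b X Y g h l w ∧ R5 X Y g h k l w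

/-!
Write `ψₙ(A)` for the Lucas sequence `0, 1, A, A² - 1, …`, whose terms solve the Pell equation
`(A² - 4) ψ² + 4 = □`. Relation (R1) packs three such equations into one and, by Matiyasevich's
two step-down lemmas, forces `C = ± ψ_B(A)`; the sign, and `J = ψ_{X+1}(U²V)` from (R2), then follow
from the congruences built into `C` and `J` and from growth. Modulo `2A - 5` the sequence is
`ψₙ(A) ≡ 2 (2ⁿ - 2⁻ⁿ) / 3`, so that (R3) says `bw = 2^B`, whence `b` is a power of two and `V` is
large. Since `ψ_{n+1}(A)` is close to `Aⁿ`, the quotient `C / J` is close to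
`(U(V + 1))^{2X} / (U²V)^X = (V + 1)^{2X} / V^X`, hence to the integer `∑ᵢ C(2X, X + i) Vⁱ`.
By (R5) this integer is then `lY`, and as `Y ∣ V` it is congruent to `C(2X, X)` modulo `Y`.
-/

/-! ### The Lucas sequence -/

/-- The Lucas sequence `ψ₀ = 0`, `ψ₁ = 1`, `ψₙ₊₂ = 2a ψₙ₊₁ - ψₙ`. For `1 < a` this is `Pell.yn`;
here the parameter may be negative. The rescaled Chebyshev polynomials `S` are indexed so that
`S 0 = 1`, hence the shift. -/
noncomputable def lucas (a : ℤ) (n : ℕ) : ℤ :=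
  (Polynomial.Chebyshev.S ℤ (n - 1)).eval (2 * a)

@[simp] lemma lucas_zero (a : ℤ) : lucas a 0 = 0 := by simp [lucas]

@[simp] lemma lucas_one (a : ℤ) : lucas a 1 = 1 := by simp [lucas]

lemma lucas_add_two (a : ℤ) (n : ℕ) : lucas a (n + 2) = 2 * a * lucas a (n + 1) - lucas a n := by
  have h := congrArg (Polynomial.eval (2 * a)) (Polynomial.Chebyshev.S_add_two ℤ (n - 1))
  rw [show (n : ℤ) - 1 + 2 = (n + 2 : ℕ) - 1 by push_cast; ring,
    show (n : ℤ) - 1 + 1 = (n + 1 : ℕ) - 1 by push_cast; ring] at h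
  simpa [lucas] using h

lemma lucas_natCast {a : ℕ} (a1 : 1 < a) (n : ℕ) : lucas a n = Pell.yn a1 n := by
  induction n using Nat.twoStepInduction with
  | zero => simp
  | one => simp
  | more n h₀ h₁ =>
    have h : (Pell.yn a1 (n + 2) + Pell.yn a1 n : ℤ) = 2 * a * Pell.yn a1 (n + 1) :=
      mod_cast Pell.yn_succ_succ a1 n
    rw [lucas_add_two, h₀, h₁]
    linarith

lemma lucas_neg (a : ℤ) (n : ℕ) : lucas (-a) n = (-1) ^ (n + 1) * lucas a n := by
  induction n using Nat.twoStepInduction with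
  | zero => simp
  | one => simp
  | more n h₀ h₁ =>
    rw [lucas_add_two, h₀, h₁, lucas_add_two]
    ring

lemma abs_lucas_abs (a : ℤ) (n : ℕ) : |lucas |a| n| = |lucas a n| := by
  rcases abs_choice a with h | h <;> simp [h, lucas_neg, abs_mul]

lemma lucas_abs_of_odd (a : ℤ) {n : ℕ} (hn : Odd n) : lucas |a| n = lucas a n := by
  rcases abs_choice a with h | h <;> simp [h, lucas_neg, hn.add_one.neg_one_pow]

lemma abs_lucas_eq_yn {a : ℤ} (a1 : 1 < a.natAbs) (n : ℕ) : |lucas a n| = Pell.yn a1 n := by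
  rw [← abs_lucas_abs, Int.abs_eq_natAbs a, lucas_natCast a1, Nat.abs_cast]

lemma two_mul_sub_dvd_lucas_sub_lucas (a b : ℤ) (n : ℕ) :
    2 * (a - b) ∣ lucas a n - lucas b n := by
  simpa [lucas, mul_sub] using Polynomial.sub_dvd_eval_sub (2 * a) (2 * b) _

lemma two_mul_sub_one_dvd_lucas_sub (a : ℤ) (n : ℕ) : 2 * (a - 1) ∣ lucas a n - n := by
  simpa [lucas, Polynomial.Chebyshev.S_eval_two] using two_mul_sub_dvd_lucas_sub_lucas a 1 n

lemma isSquare_lucas (a : ℤ) (n : ℕ) : IsSquare ((a ^ 2 - 1) * lucas a n ^ 2 + 1) := by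
  have norm : lucas a n ^ 2 + lucas a (n + 1) ^ 2 - 2 * a * lucas a n * lucas a (n + 1) = 1 := by
    simpa [lucas] using
      congrArg (Polynomial.eval (2 * a)) (Polynomial.Chebyshev.S_sq_add_S_sq ℤ (n - 1))
  exact ⟨lucas a (n + 1) - a * lucas a n, by linear_combination -norm⟩

lemma exists_abs_eq_abs_lucas {a c : ℤ} (a1 : 1 < a.natAbs)
    (h : IsSquare ((a ^ 2 - 1) * c ^ 2 + 1)) : ∃ n, |c| = |lucas a n| := by
  obtain ⟨s, hs⟩ := h
  have norm : s.natAbs * s.natAbs = (a.natAbs * a.natAbs - 1) * c.natAbs * c.natAbs + 1 := by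
    zify [(Nat.one_le_iff_ne_zero.2 (by positivity) : 1 ≤ a.natAbs * a.natAbs)]
    rw [abs_mul_abs_self, abs_mul_abs_self, mul_assoc, abs_mul_abs_self]
    linear_combination -hs
  obtain ⟨n, -, hn⟩ := Pell.eq_pell a1 (x := s.natAbs) (y := c.natAbs) (by
    change s.natAbs * s.natAbs - (a.natAbs * a.natAbs - 1) * c.natAbs * c.natAbs = 1
    lia)
  exact ⟨n, by rw [abs_lucas_eq_yn a1, ← hn, Int.natCast_natAbs]⟩

lemma exists_abs_eq_abs_lucas_of_four {a c : ℤ} (a1 : 1 < a.natAbs)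
    (h : IsSquare (((2 * a) ^ 2 - 4) * c ^ 2 + 4)) : ∃ n, |c| = |lucas a n| := by
  obtain ⟨s, hs⟩ := h
  obtain ⟨t, rfl⟩ : (2 : ℤ) ∣ s :=
    Int.prime_two.dvd_of_dvd_pow (n := 2) ⟨2 * ((a ^ 2 - 1) * c ^ 2 + 1), by linarith⟩
  exact exists_abs_eq_abs_lucas a1 ⟨t, by linarith⟩

lemma monotone_lucas {a : ℤ} (ha : 1 ≤ a) : Monotone (lucas a) := by
  suffices h : ∀ n, 0 ≤ lucas a n ∧ lucas a n ≤ lucas a (n + 1) from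
    monotone_nat_of_le_succ fun n => (h n).2
  intro n
  induction n with
  | zero => simp
  | succ n ih => exact ⟨ih.1.trans ih.2, by rw [lucas_add_two]; nlinarith⟩

lemma lucas_nonneg {a : ℤ} (ha : 1 ≤ a) (n : ℕ) : 0 ≤ lucas a n := by
  simpa using monotone_lucas ha n.zero_le

lemma pow_le_lucas {a : ℤ} (ha : 1 ≤ a) (n : ℕ) : (2 * a - 1) ^ n ≤ lucas a (n + 1) := by
  induction n with
  | zero => simp
  | succ n ih =>
    rw [lucas_add_two, pow_succ]
    nlinarith [monotone_lucas ha n.le_succ]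

lemma lucas_le_pow {a : ℤ} (ha : 1 ≤ a) (n : ℕ) : lucas a (n + 1) ≤ (2 * a) ^ n := by
  induction n with
  | zero => simp
  | succ n ih =>
    rw [lucas_add_two, pow_succ]
    nlinarith [lucas_nonneg ha n]

lemma abs_lucas {a : ℤ} (ha : 1 ≤ |a|) (n : ℕ) : |lucas a n| = lucas |a| n := by
  rw [← abs_lucas_abs, abs_of_nonneg (lucas_nonneg ha n)]

/-- Modulo `4a - 5` one has `2a = 2 + 2⁻¹`, so `ψₙ = (2ⁿ - 2⁻ⁿ) / (2 - 2⁻¹)`. -/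
lemma dvd_three_mul_two_pow_mul_lucas_sub (a : ℤ) (n : ℕ) :
    4 * a - 5 ∣ 3 * 2 ^ n * lucas a n - 2 * (4 ^ n - 1) := by
  induction n using Nat.twoStepInduction with
  | zero => simp
  | one => simp
  | more n h₀ h₁ =>
    have recurrence : 3 * 2 ^ (n + 2) * lucas a (n + 2) - 2 * (4 ^ (n + 2) - 1) =
        (4 * a - 5) * (3 * 2 ^ (n + 1) * lucas a (n + 1))
          + 5 * (3 * 2 ^ (n + 1) * lucas a (n + 1) - 2 * (4 ^ (n + 1) - 1))
          - 4 * (3 * 2 ^ n * lucas a n - 2 * (4 ^ n - 1)) := by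
      rw [lucas_add_two]; ring
    rw [recurrence]
    exact dvd_sub (dvd_add (dvd_mul_right _ _) (h₁.mul_left _)) (h₀.mul_left _)

lemma dvd_two_mul_two_pow_sub_mul {a q : ℤ} {n : ℕ}
    (h : 4 * a - 5 ∣ 3 * q * lucas a n - 2 * (q ^ 2 - 1)) :
    4 * a - 5 ∣ 2 * ((2 ^ n - q) * (2 ^ n * q + 1)) := by
  have elimination : 2 * ((2 ^ n - q) * (2 ^ n * q + 1)) =
      2 ^ n * (3 * q * lucas a n - 2 * (q ^ 2 - 1))
        - q * (3 * 2 ^ n * lucas a n - 2 * (4 ^ n - 1)) := by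
    rw [show (4 : ℤ) ^ n = 2 ^ n * 2 ^ n by rw [← mul_pow]; norm_num]; ring
  rw [elimination]
  exact dvd_sub (h.mul_left _) ((dvd_three_mul_two_pow_mul_lucas_sub a n).mul_left _)

/-! ### Divisibility in the Lucas sequence -/

lemma natCast_le_abs_lucas {a : ℤ} (a1 : 1 < a.natAbs) (n : ℕ) : n ≤ |lucas a n| := by
  rw [abs_lucas_eq_yn a1]
  exact_mod_cast Pell.yn_ge_n a1 n

lemma natCast_le_lucas {a : ℤ} (a1 : 1 < a) (n : ℕ) : n ≤ lucas a n := by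
  simpa [abs_of_nonneg (lucas_nonneg a1.le n)] using
    natCast_le_abs_lucas (a := a) (by lia) n

lemma two_mul_le_abs_lucas {a : ℤ} (a1 : 1 < a.natAbs) {n : ℕ} (hn : 1 < n) :
    2 * n ≤ |lucas a n| := by
  obtain ⟨k, rfl⟩ : ∃ k, n = k + 2 := ⟨n - 2, by lia⟩
  have hy : (k + 1) * 2 ≤ Pell.yn a1 (k + 1) * a.natAbs :=
    Nat.mul_le_mul (Pell.yn_ge_n a1 (k + 1)) a1
  have hx := Pell.n_lt_xn a1 (k + 1)
  rw [abs_lucas_eq_yn a1, Pell.yn_succ]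
  lia

lemma lucas_dvd_lucas_mul {a : ℤ} (a1 : 1 < a.natAbs) (m n : ℕ) :
    lucas a m ∣ lucas a (m * n) := by
  rw [← abs_dvd_abs, abs_lucas_eq_yn a1, abs_lucas_eq_yn a1]
  exact_mod_cast Pell.y_mul_dvd a1 m n

lemma lucas_dvd_of_sq_dvd_lucas {a : ℤ} (a1 : 1 < a.natAbs) {m n : ℕ}
    (h : lucas a m ^ 2 ∣ lucas a n) : lucas a m ∣ n := by
  rw [← dvd_abs, ← sq_abs, abs_lucas_eq_yn a1, abs_lucas_eq_yn a1, sq] at h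
  rw [← abs_dvd, abs_lucas_eq_yn a1]
  exact_mod_cast Pell.dvd_of_ysq_dvd a1 (mod_cast h)

lemma not_isSquare_sq_sub_one_mul_sq {a M : ℤ} (a1 : 1 < a) (hM : M ≠ 0) :
    ¬IsSquare ((a ^ 2 - 1) * M ^ 2) := by
  rintro ⟨s, hs⟩
  obtain ⟨t, rfl⟩ : M ∣ s :=
    (Int.pow_dvd_pow_iff two_ne_zero).1 ⟨a ^ 2 - 1, by linarith⟩
  have ht : a ^ 2 - 1 = |t| ^ 2 := by
    rw [sq_abs]
    exact mul_right_cancel₀ (pow_ne_zero 2 hM) (by linarith)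
  have upper : |t| < a := by nlinarith
  have lower : a - 1 < |t| := by nlinarith [abs_nonneg t]
  lia

lemma exists_dvd_lucas {a M : ℤ} (a1 : 1 < a) (hM : M ≠ 0) : ∃ k, 0 < k ∧ M ∣ lucas a k := by
  have hd : 0 < (a ^ 2 - 1) * M ^ 2 := mul_pos (by nlinarith) (by positivity)
  obtain ⟨s, t, hst, ht⟩ :=
    Pell.exists_of_not_isSquare hd (not_isSquare_sq_sub_one_mul_sq a1 hM)
  obtain ⟨k, hk⟩ : ∃ k, |M * t| = |lucas a k| :=
    exists_abs_eq_abs_lucas (by lia) ⟨s, by linear_combination -hst⟩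
  refine ⟨k, Nat.pos_of_ne_zero ?_, ?_⟩
  · rintro rfl
    simp_all
  · rw [← dvd_abs, ← hk, dvd_abs]
    exact dvd_mul_right M t

lemma exists_lucas_eq_mul {a M : ℤ} (a1 : 1 < a) (hM : 0 < M) (b : ℤ) :
    ∃ k x, b ≤ x ∧ lucas a k = M * x := by
  obtain ⟨k, hk, hdvd⟩ := exists_dvd_lucas a1 hM.ne'
  obtain ⟨x, hx⟩ := hdvd.trans (lucas_dvd_lucas_mul (by lia) k (M * b).toNat)
  refine ⟨_, x, le_of_mul_le_mul_left ?_ hM, hx⟩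
  calc M * b ≤ (M * b).toNat := Int.self_le_toNat _
    _ ≤ (k * (M * b).toNat : ℕ) := mod_cast Nat.le_mul_of_pos_left _ hk
    _ ≤ M * x := hx ▸ natCast_le_lucas a1 _

/-! ### Congruence up to sign -/

/-- `x ≡ ±y` modulo `M`. -/
def SignModEq (M x y : ℤ) : Prop := M ∣ x - y ∨ M ∣ x + y

namespace SignModEq

variable {M x y z : ℤ}

lemma symm (h : SignModEq M x y) : SignModEq M y x :=
  h.imp (fun h => dvd_sub_comm.1 h) fun h => add_comm x y ▸ h

lemma trans (hxy : SignModEq M x y) (hyz : SignModEq M y z) : SignModEq M x z := by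
  rcases hxy with ⟨s, hs⟩ | ⟨s, hs⟩ <;> rcases hyz with ⟨t, ht⟩ | ⟨t, ht⟩
  · exact .inl ⟨s + t, by linarith⟩
  · exact .inr ⟨s + t, by linarith⟩
  · exact .inr ⟨s - t, by linarith⟩
  · exact .inl ⟨s - t, by linarith⟩

lemma of_dvd {M' : ℤ} (hM : M' ∣ M) (h : SignModEq M x y) : SignModEq M' x y :=
  h.imp hM.trans hM.trans

lemma of_abs_eq (h : |x| = |y|) : SignModEq M x y := by
  rcases abs_eq_abs.1 h with rfl | rfl
  · exact .inl (by simp)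
  · exact .inr (by simp)

lemma natCast_eq {m n : ℕ} (h : SignModEq M m n) (hm : 2 * m ≤ |M|) (hn : 2 * n ≤ |M|)
    (hn0 : 0 < n) : m = n := by
  rcases h with h | h <;> rw [← abs_dvd] at h
  · have := Int.eq_zero_of_abs_lt_dvd h (by rw [abs_lt]; lia)
    lia
  · have := Int.le_of_dvd (by lia) h
    lia

end SignModEq

/-- A form of the second step-down lemma. -/
lemma signModEq_of_dvd_lucas_sq_sub_sq {a : ℤ} (a1 : 1 < a.natAbs) {r m n : ℕ} (hm : 0 < m)
    (hmn : 2 * m ≤ n)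
    (h : (a ^ 2 - 1) * lucas a n ^ 2 + 1 ∣ lucas a r ^ 2 - lucas a m ^ 2) :
    SignModEq (2 * n) r m := by
  have norm (k : ℕ) : (Pell.xn a1 k : ℤ) ^ 2 = (a ^ 2 - 1) * lucas a k ^ 2 + 1 := by
    have pell := Pell.pell_eqz a1 k
    rw [Pell.dz_val, Pell.az, Int.natAbs_mul_self', Pell.xz, Pell.yz] at pell
    rw [← sq_abs (lucas a k), abs_lucas_eq_yn a1]
    linear_combination pell
  have double (k : ℕ) : (Pell.xn a1 (2 * k) : ℤ) = 2 * (a ^ 2 - 1) * lucas a k ^ 2 + 1 := by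
    rw [two_mul k, Pell.xn_add, Nat.cast_add, Nat.cast_mul, Nat.cast_mul, Nat.cast_mul, Pell.dz_val,
      Pell.az, Int.natAbs_mul_self', ← abs_lucas_eq_yn a1]
    linear_combination norm k + (a ^ 2 - 1) * sq_abs (lucas a k)
  have congr : Pell.xn a1 (2 * r) ≡ Pell.xn a1 (2 * m) [MOD Pell.xn a1 n] := by
    rw [← Int.natCast_modEq_iff, Int.modEq_comm, Int.modEq_iff_dvd, double, double]
    rw [← norm] at h
    have := ((dvd_pow_self _ two_ne_zero).trans h).mul_left (2 * (a ^ 2 - 1))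
    rwa [mul_sub, ← add_sub_add_right_eq_sub _ _ 1] at this
  rcases Pell.modEq_of_xn_modEq a1 (by lia) hmn congr with h | h
  · obtain ⟨t, ht⟩ := Nat.modEq_iff_dvd.1 h.symm
    exact .inl ⟨t, by push_cast at ht; linarith⟩
  · obtain ⟨t, ht⟩ := Nat.modEq_zero_iff_dvd.1 h
    exact .inr ⟨t, by zify at ht; linarith⟩

/-! ### The coding of `c = ψ_B(2a)` by a single square -/

/-- The values `D, E, F, G` of the paper, for `A = 2a`, `C = c` and a given `x`. -/
structure PellTower (a c x D E F G : ℤ) : Prop where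
  D_eq : D = ((2 * a) ^ 2 - 4) * c ^ 2 + 4
  E_eq : E = c ^ 2 * D * x
  F_eq : F = 4 * ((2 * a) ^ 2 - 4) * E ^ 2 + 1
  G_eq : G = 1 + c * D * F - 2 * (2 * a + 2) * (2 * a - 2) ^ 2 * E ^ 2

lemma isSquare_of_isCoprime {a b : ℤ} (ha : 0 ≤ a) (hab : IsCoprime a b)
    (h : IsSquare (a * b)) : IsSquare a := by
  obtain ⟨c, hc⟩ := h
  obtain ⟨z, rfl | rfl⟩ := Int.sq_of_isCoprime hab (hc.trans (sq c).symm)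
  · exact IsSquare.sq z
  · exact ⟨0, by linarith [sq_nonneg z]⟩

namespace PellTower

variable {a c x D E F G H : ℤ}

lemma G_sub_eq (h : PellTower a c x D E F G) : G - a = F * (c * D - a + 1) := by
  linear_combination h.G_eq + (a - 1) * h.F_eq

lemma F_dvd_G_sub (h : PellTower a c x D E F G) : F ∣ G - a :=
  ⟨_, h.G_sub_eq⟩

lemma D_dvd_G_sub_one (h : PellTower a c x D E F G) : D ∣ G - 1 :=
  ⟨c * F - 2 * (2 * a + 2) * (2 * a - 2) ^ 2 * c ^ 2 * x * E, by
    linear_combination h.G_eq - 2 * (2 * a + 2) * (2 * a - 2) ^ 2 * E * h.E_eq⟩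

lemma two_mul_dvd_F_sub_one (h : PellTower a c x D E F G) : 2 * c ∣ F - 1 :=
  ⟨2 * ((2 * a) ^ 2 - 4) * E * c * D * x, by
    linear_combination h.F_eq + 4 * ((2 * a) ^ 2 - 4) * E * h.E_eq⟩

lemma two_mul_dvd_G_sub_one (h : PellTower a c x D E F G) : 2 * c ∣ G - 1 :=
  ⟨2 * ((a ^ 2 - 1) * c ^ 2 + 1) * F - (2 * a + 2) * (2 * a - 2) ^ 2 * E * c * D * x, by
    linear_combination h.G_eq + c * F * h.D_eq -
      2 * (2 * a + 2) * (2 * a - 2) ^ 2 * E * h.E_eq⟩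

lemma isCoprime_D_F (h : PellTower a c x D E F G) : IsCoprime D F :=
  ⟨-(4 * ((2 * a) ^ 2 - 4) * (c ^ 2 * x) ^ 2 * D), 1, by rw [h.F_eq, h.E_eq]; ring⟩

lemma isCoprime_D_I (h : PellTower a c x D E F G) : IsCoprime D ((G ^ 2 - 1) * H ^ 2 + 1) := by
  obtain ⟨t, ht⟩ := h.D_dvd_G_sub_one
  exact ⟨-(t * (G + 1) * H ^ 2), 1, by linear_combination (G + 1) * H ^ 2 * ht⟩

lemma isCoprime_F_I (h : PellTower a c x D E F G) (hH : F ∣ H - c) :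
    IsCoprime F ((G ^ 2 - 1) * H ^ 2 + 1) := by
  obtain ⟨t, ht⟩ := h.F_dvd_G_sub
  obtain ⟨u, hu⟩ := hH
  have four_mul : 4 * ((G ^ 2 - 1) * H ^ 2 + 1)
      = D + F * (4 * (t * (G + a) * H ^ 2 + (a ^ 2 - 1) * u * (H + c))) := by
    linear_combination 4 * (G + a) * H ^ 2 * ht + 4 * (a ^ 2 - 1) * (H + c) * hu - h.D_eq
  have : IsCoprime F (4 * ((G ^ 2 - 1) * H ^ 2 + 1)) :=
    four_mul ▸ h.isCoprime_D_F.symm.add_mul_left_right _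
  exact this.of_mul_right_right

lemma D_pos (h : PellTower a c x D E F G) (ha : a ≠ 0) : 0 < D := by
  have : 0 < a ^ 2 := by positivity
  rw [h.D_eq]
  nlinarith [sq_nonneg c]

lemma E_ne_zero (h : PellTower a c x D E F G) (ha : a ≠ 0) (hc : c ≠ 0) (hx : x ≠ 0) :
    E ≠ 0 := by
  rw [h.E_eq]
  exact mul_ne_zero (mul_ne_zero (pow_ne_zero 2 hc) (h.D_pos ha).ne') hx

lemma F_pos (h : PellTower a c x D E F G) (ha : a ≠ 0) : 0 < F := by
  have : 0 < a ^ 2 := by positivity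
  rw [h.F_eq]
  nlinarith [sq_nonneg E]

/-- Otherwise `|G - a| < F`, and `G ≡ a` modulo `F` would give `G = a`. -/
lemma one_lt_natAbs_G (h : PellTower a c x D E F G) (a1 : 1 < a.natAbs) (hE : E ≠ 0) :
    1 < G.natAbs := by
  by_contra! hG
  have ha : 2 ≤ |a| := by rw [Int.abs_eq_natAbs]; exact_mod_cast a1
  have hG' : |G| ≤ 1 := by rw [Int.abs_eq_natAbs]; exact_mod_cast hG
  have hF : |a| + 1 < F := by
    have hE2 : 1 ≤ E ^ 2 := by have : 0 < E ^ 2 := (by positivity); lia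
    have : |a| ≤ 16 * (|a| ^ 2 - 1) := by nlinarith
    rw [h.F_eq, mul_pow, ← sq_abs a]
    nlinarith
  have : G - a = 0 := Int.eq_zero_of_abs_lt_dvd h.F_dvd_G_sub (by linarith [abs_sub G a])
  rw [← sub_eq_zero.1 this] at ha
  linarith

lemma isSquare_and_isSquare_and_isSquare (h : PellTower a c x D E F G) (a1 : 1 < a.natAbs)
    (hE : E ≠ 0) (hH : F ∣ H - c) (hI : IsSquare (D * F * ((G ^ 2 - 1) * H ^ 2 + 1))) :
    IsSquare D ∧ IsSquare F ∧ IsSquare ((G ^ 2 - 1) * H ^ 2 + 1) := by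
  have hDF := h.isCoprime_D_F
  have hDI := h.isCoprime_D_I (H := H)
  have hFI := h.isCoprime_F_I hH
  have hG : 0 < G ^ 2 := by have := h.one_lt_natAbs_G a1 hE; positivity [show G ≠ 0 by lia]
  refine ⟨isSquare_of_isCoprime (h.D_pos (by lia)).le (hDF.mul_right hDI) ?_,
    isSquare_of_isCoprime (h.F_pos (by lia)).le (hDF.symm.mul_right hFI) ?_,
    isSquare_of_isCoprime (by nlinarith [sq_nonneg H]) (hDI.symm.mul_right hFI.symm) ?_⟩
  all_goals convert hI using 1; ring

/-- The index `n` of `4E` is so large that the step-down lemma applies. -/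
lemma two_mul_le_index (h : PellTower a c x D E F G) (a1 : 1 < a.natAbs) (hc : 2 ≤ |c|) {m n : ℕ}
    (hm : |c| = |lucas a m|) (hn : |4 * E| = |lucas a n|) (hE : E ≠ 0) :
    c ∣ n ∧ 2 * m ≤ n := by
  have hcn : lucas a m ∣ n := by
    apply lucas_dvd_of_sq_dvd_lucas a1
    rw [← sq_abs, ← hm, sq_abs, ← dvd_abs, ← hn, dvd_abs, h.E_eq]
    exact ⟨4 * D * x, by ring⟩
  have hn0 : 0 < n := by
    refine Nat.pos_of_ne_zero ?_
    rintro rfl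
    simp_all
  have hle : |c| ≤ n := by
    rw [hm]
    exact Int.le_of_dvd (mod_cast hn0) ((abs_dvd _ _).2 hcn)
  refine ⟨by rwa [← abs_dvd, hm, abs_dvd], ?_⟩
  rcases lt_or_ge 1 m with hm1 | hm1
  · have := two_mul_le_abs_lucas a1 hm1
    lia
  · lia

lemma signModEq_index (h : PellTower a c x D E F G) (a1 : 1 < a.natAbs) (hc : 2 ≤ |c|)
    (hE : E ≠ 0) (hHF : F ∣ H - c) {m n r : ℕ} (hm : |c| = |lucas a m|)
    (hn : |4 * E| = |lucas a n|) (hr : |H| = |lucas G r|) (hm0 : 0 < m) :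
    SignModEq (2 * c) r m := by
  have hF : F ∣ lucas a r ^ 2 - lucas a m ^ 2 := by
    have hG : F ∣ lucas G r - lucas a r :=
      (h.F_dvd_G_sub.mul_left 2).trans (two_mul_sub_dvd_lucas_sub_lucas G a r)
    have : lucas a r ^ 2 - lucas a m ^ 2 =
        (H - c) * (H + c) - (lucas G r - lucas a r) * (lucas G r + lucas a r) := by
      linear_combination (sq_eq_sq_iff_abs_eq_abs _ _).2 hm - (sq_eq_sq_iff_abs_eq_abs _ _).2 hr
    exact this ▸ dvd_sub (hHF.mul_right _) (hG.mul_right _)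
  have hF_eq : (a ^ 2 - 1) * lucas a n ^ 2 + 1 = F := by
    linear_combination -h.F_eq - (a ^ 2 - 1) * (sq_eq_sq_iff_abs_eq_abs _ _).2 hn
  obtain ⟨hcn, hmn⟩ := h.two_mul_le_index a1 hc hm hn hE
  exact (signModEq_of_dvd_lucas_sq_sub_sq a1 hm0 hmn (hF_eq ▸ hF)).of_dvd (mul_dvd_mul_left 2 hcn)

theorem abs_eq_abs_lucas (h : PellTower a c x D E F G) {N : ℕ} (a1 : 1 < a.natAbs) (hx : x ≠ 0)
    (hN : 2 ≤ N) (hNc : N ≤ |c|) (hHF : F ∣ H - c) (hHN : 2 * c ∣ H - N)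
    (hI : IsSquare (D * F * ((G ^ 2 - 1) * H ^ 2 + 1))) : |c| = |lucas a N| := by
  have hE : E ≠ 0 := h.E_ne_zero (by lia) (by rintro rfl; simp at hNc; lia) hx
  obtain ⟨hDsq, hFsq, hIsq⟩ := h.isSquare_and_isSquare_and_isSquare a1 hE hHF hI
  obtain ⟨m, hm⟩ : ∃ m, |c| = |lucas a m| := exists_abs_eq_abs_lucas_of_four a1 (h.D_eq ▸ hDsq)
  obtain ⟨n, hn⟩ : ∃ n, |4 * E| = |lucas a n| := by
    have hF_eq : F = (a ^ 2 - 1) * (4 * E) ^ 2 + 1 := by linear_combination h.F_eq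
    exact exists_abs_eq_abs_lucas a1 (hF_eq ▸ hFsq)
  obtain ⟨r, hr⟩ : ∃ r, |H| = |lucas G r| :=
    exists_abs_eq_abs_lucas (h.one_lt_natAbs_G a1 hE) hIsq
  have hm0 : 0 < m := by
    refine Nat.pos_of_ne_zero ?_
    rintro rfl
    simp_all
  have hrm : SignModEq (2 * c) r m := h.signModEq_index a1 (by lia) hE hHF hm hn hr hm0
  have hHr : SignModEq (2 * c) H r := (SignModEq.of_abs_eq hr).trans
    (.inl ((h.two_mul_dvd_G_sub_one.mul_left 2).trans (two_mul_sub_one_dvd_lucas_sub G r)))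
  have hNm : N = m := by
    refine ((SignModEq.symm (.inl hHN)).trans (hHr.trans hrm)).natCast_eq ?_ ?_ hm0 <;>
    rw [abs_mul, abs_two]
    · lia
    · have := natCast_le_abs_lucas a1 m
      lia
  rw [hm, hNm]

end PellTower

namespace PellTower

variable {a b c x y D E F G : ℤ} {N : ℕ}

lemma exists_lucas_eq (h : PellTower a (lucas a N) x D E F G) :
    ∃ y, lucas G N = lucas a N + N * F + (2 * y - 1) * lucas a N * F := by
  set c := lucas a N
  obtain ⟨t, ht⟩ := h.two_mul_dvd_F_sub_one
  have coprime : IsCoprime (2 * c) F := ⟨-t, 1, by linarith⟩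
  have dvd : 2 * c * F ∣ lucas G N - c - N * F + c * F := by
    refine coprime.mul_dvd ?_ ?_
    · have hG : 2 * c ∣ lucas G N - N :=
        (h.two_mul_dvd_G_sub_one.mul_left 2).trans (two_mul_sub_one_dvd_lucas_sub G N)
      convert hG.add (h.two_mul_dvd_F_sub_one.mul_right (c - N)) using 1
      ring
    · have hG : F ∣ lucas G N - c :=
        (h.F_dvd_G_sub.mul_left 2).trans (two_mul_sub_dvd_lucas_sub_lucas G a N)
      convert hG.add (dvd_mul_right F (c - N)) using 1
      ring
  obtain ⟨y, hy⟩ := dvd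
  exact ⟨y, by linear_combination hy⟩

lemma le_F (h : PellTower a c x D E F G) (ha : 1 < a) (hc : 1 ≤ c) (hx : 1 ≤ x) :
    2 * x + 1 ≤ F := by
  have hD : 1 ≤ D := h.D_pos (by lia)
  have hxE : x ≤ E := by
    rw [h.E_eq]
    exact le_mul_of_one_le_left (by lia) (one_le_mul_of_one_le_of_one_le (one_le_pow₀ hc) hD)
  have hEE : E ≤ E ^ 2 := by nlinarith
  have : 2 ≤ 4 * ((2 * a) ^ 2 - 4) := by nlinarith
  rw [h.F_eq]
  nlinarith

lemma mul_lt_G (h : PellTower a c x D E F G) (ha : 1 < a) (hc : 1 ≤ c) (hF : 1 ≤ F) :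
    F * c < G := by
  have hD : a ≤ D := by
    have : a ≤ (2 * a) ^ 2 - 4 := by nlinarith
    have : (2 * a) ^ 2 - 4 ≤ ((2 * a) ^ 2 - 4) * c ^ 2 :=
      le_mul_of_one_le_right (by lia) (one_le_pow₀ hc)
    linarith [h.D_eq]
  have : c ≤ c * D - a + 1 := by nlinarith
  nlinarith [h.G_sub_eq]

/-- By growth, `ψ_N(2G) ≥ (cF)²`. -/
lemma le_of_lucas_eq (h : PellTower a c x D E F G) (ha : 1 < a) (hN : 3 ≤ N) (hNc : N ≤ c)
    (hx : 1 ≤ x) (hbx : b ≤ x) (hy : lucas G N = c + N * F + (2 * y - 1) * c * F) : b ≤ y := by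
  have hF : 2 * x + 1 ≤ F := h.le_F ha (by lia) hx
  have hG : F * c < G := h.mul_lt_G ha (by lia) (by lia)
  have hFc : 1 ≤ F * c := one_le_mul_of_one_le_of_one_le (by lia) (by lia)
  have growth : (F * c) ^ 2 ≤ lucas G N := by
    obtain ⟨n, rfl⟩ : ∃ n, N = n + 3 := ⟨N - 3, by lia⟩
    calc (F * c) ^ 2 ≤ (2 * G - 1) ^ 2 := pow_le_pow_left₀ (by lia) (by lia) 2
      _ ≤ (2 * G - 1) ^ (n + 2) := pow_le_pow_right₀ (by lia) (by lia)
      _ ≤ lucas G (n + 3) := pow_le_lucas (by lia) (n + 2)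
  have hNF : N * F ≤ c * F := mul_le_mul_of_nonneg_right hNc (by lia)
  by_contra! hyb
  have : F * c * (2 * y + 1) ≤ F * c * (F - 2) := mul_le_mul_of_nonneg_left (by lia) (by lia)
  have : F * c * F ≤ F * c * (F * c) :=
    mul_le_mul_of_nonneg_left (le_mul_of_one_le_right (by lia) (by lia)) (by lia)
  have : c ≤ F * c := le_mul_of_one_le_left (by lia) (by lia)
  linarith

end PellTower

theorem exists_isSquare_of_eq_lucas {a : ℤ} {N : ℕ} (ha : 1 < a) (hN : 3 ≤ N) (b : ℤ) :
    ∃ x, b ≤ x ∧ ∀ {D E F G}, PellTower a (lucas a N) x D E F G → ∃ y, b ≤ y ∧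
      IsSquare (D * F *
        ((G ^ 2 - 1) * (lucas a N + N * F + (2 * y - 1) * lucas a N * F) ^ 2 + 1)) := by
  set c := lucas a N
  have hNc : N ≤ c := natCast_le_lucas ha N
  obtain ⟨k, x, hx, hk⟩ : ∃ k x, max b 1 ≤ x ∧
      lucas a k = 4 * (c ^ 2 * (((2 * a) ^ 2 - 4) * c ^ 2 + 4)) * x := by
    refine exists_lucas_eq_mul ha ?_ _
    have : 0 < a ^ 2 - 1 := by nlinarith
    rw [show (2 * a) ^ 2 - 4 = 4 * (a ^ 2 - 1) by ring]
    positivity [show 0 < c by lia]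
  refine ⟨x, le_of_max_le_left hx, fun {D E F G} h => ?_⟩
  obtain ⟨y, hy⟩ := h.exists_lucas_eq
  refine ⟨y, h.le_of_lucas_eq ha hN hNc (le_of_max_le_right hx) (le_of_max_le_left hx) hy, ?_⟩
  have hD : IsSquare D := by
    obtain ⟨s, hs⟩ := isSquare_lucas a N
    exact ⟨2 * s, by linear_combination h.D_eq + 4 * hs⟩
  have hF : IsSquare F := by
    have hE : 4 * E = lucas a k := by rw [hk, h.E_eq, h.D_eq]; ring
    have hF_eq : F = (a ^ 2 - 1) * lucas a k ^ 2 + 1 := by rw [← hE, h.F_eq]; ring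
    exact hF_eq ▸ isSquare_lucas a k
  exact (hD.mul hF).mul (hy ▸ isSquare_lucas G N)

/-! ### Approximating `(v + 1)²ⁿ / vⁿ` -/

section OrderedField

variable {K : Type*} [Field K] [LinearOrder K] [IsStrictOrderedRing K]

lemma pow_mul_one_sub_div_le_sub_one_pow {p : K} (hp : 1 ≤ p) (n : ℕ) :
    p ^ n * (1 - n / p) ≤ (p - 1) ^ n := by
  have hp0 : 0 < p := by linarith
  have bernoulli : 1 + n * (-(1 / p)) ≤ (1 + -(1 / p)) ^ n :=
    one_add_mul_le_pow (by linarith [(div_le_one hp0).2 hp]) n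
  calc p ^ n * (1 - n / p) = p ^ n * (1 + n * (-(1 / p))) := by ring
    _ ≤ p ^ n * (1 + -(1 / p)) ^ n := by gcongr
    _ = (p - 1) ^ n := by
      rw [← mul_pow]
      congr 1
      field_simp
      ring

lemma add_one_pow_le_two_mul_pow {v : K} {n : ℕ} (hv : 0 ≤ v) (hnv : 2 * n ≤ v + 1) :
    (v + 1) ^ n ≤ 2 * v ^ n := by
  have bernoulli := pow_mul_one_sub_div_le_sub_one_pow (p := v + 1) (by linarith) n
  have half : 1 / 2 ≤ 1 - (n : K) / (v + 1) := by
    have : (n : K) / (v + 1) ≤ 1 / 2 := (div_le_iff₀ (by linarith)).2 (by linarith)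
    linarith
  have : (v + 1) ^ n * (1 / 2) ≤ (v + 1) ^ n * (1 - n / (v + 1)) := by gcongr
  rw [add_sub_cancel_right] at bernoulli
  linarith

lemma abs_div_sub_lt {q t α β δ c j : K} (hq : 0 < q) (hδ : 0 < δ) (hδt : δ ≤ t) (hβ : β ≤ 1 / 2)
    (hαδ : t * α < δ) (hβδ : t * β < δ / 2) (hc : q * t * (1 - α) ≤ c) (hc' : c ≤ q * t)
    (hj : q * (1 - β) ≤ j) (hj' : j ≤ q) : |c / j - t| < δ := by
  have hj0 : 0 < j := (mul_pos hq (by linarith)).trans_le hj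
  have lower : (t - δ) * j < c := calc
    (t - δ) * j ≤ (t - δ) * q := by gcongr
    _ < q * (t - t * α) := by rw [mul_comm]; gcongr
    _ ≤ c := by linarith
  have upper : c < (t + δ) * j := calc
    c ≤ q * t := hc'
    _ < q * ((t + δ) * (1 - β)) := by gcongr; linarith [mul_le_mul_of_nonneg_left hβ hδ.le]
    _ = (t + δ) * (q * (1 - β)) := by ring
    _ ≤ (t + δ) * j := by gcongr; linarith
  rw [← lt_div_iff₀ hj0] at lower
  rw [← div_lt_iff₀ hj0] at upper
  rw [abs_lt]
  constructor <;> linarith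

lemma one_le_add_one_pow_div_pow {v : K} (hv : 0 < v) (n : ℕ) :
    1 ≤ (v + 1) ^ (2 * n) / v ^ n := by
  rw [one_le_div (by positivity), mul_comm, pow_mul]
  exact (pow_le_pow_left₀ hv.le (by linarith) n).trans
    (le_self_pow₀ (one_le_pow₀ (by linarith)) two_ne_zero)

lemma add_one_pow_div_pow_le {v : K} {n : ℕ} (hv : 0 < v) (hnv : 4 * n ≤ v + 1) :
    (v + 1) ^ (2 * n) / v ^ n ≤ 2 * v ^ n := by
  rw [div_le_iff₀ (by positivity), mul_assoc, ← pow_add, ← two_mul]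
  exact add_one_pow_le_two_mul_pow hv.le (by push_cast; linarith)

lemma abs_div_sub_add_one_pow_div_lt {u v g c j : K} {n : ℕ} (hu : 1 ≤ u) (hg : 1 ≤ g)
    (hv : 64 * 2 ^ n * g ≤ v) (hnu : n * v ^ n ≤ u * 2 ^ n)
    (hc : (u * (v + 1) - 1) ^ (2 * n) ≤ c) (hc' : c ≤ (u * (v + 1)) ^ (2 * n))
    (hj : (u ^ 2 * v - 1) ^ n ≤ j) (hj' : j ≤ (u ^ 2 * v) ^ n) :
    |c / j - (v + 1) ^ (2 * n) / v ^ n| < 1 / (8 * g) := by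
  set t := (v + 1) ^ (2 * n) / v ^ n
  have h2 : (2 : K) ^ n ≤ 2 ^ n * g := le_mul_of_one_le_right (by positivity) hg
  have hv1 : 1 ≤ v := by linarith [one_le_pow₀ one_le_two (M₀ := K) (n := n)]
  have hnv : 64 * n ≤ v := by
    have : (n : K) ≤ 2 ^ n := mod_cast (Nat.lt_two_pow_self (n := n)).le
    linarith
  have htn : t * n ≤ 2 * (u * 2 ^ n) := by
    have ht := add_one_pow_div_pow_le (n := n) (zero_lt_one.trans_le hv1) (by linarith)
    linarith [mul_le_mul_of_nonneg_right ht (Nat.cast_nonneg (α := K) n)]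
  have htg : t * n * g ≤ 2 * (u * 2 ^ n) * g := by gcongr
  have huv : v ≤ u * v := le_mul_of_one_le_left (by linarith) hu
  have huuv : u * v ≤ u ^ 2 * v := by gcongr; exact le_self_pow₀ hu two_ne_zero
  have hu2 : 64 * (u * 2 ^ n) * g ≤ u * v := by
    linarith [mul_le_mul_of_nonneg_left hv (zero_le_one.trans hu)]
  have hu0 : 0 < u * 2 ^ n * g := by positivity
  have hqt : (u ^ 2 * v) ^ n * t = (u * (v + 1)) ^ (2 * n) := by
    simp only [t, mul_pow, ← pow_mul]
    field_simp
  refine abs_div_sub_lt (q := (u ^ 2 * v) ^ n) (α := (2 * n : ℕ) / (u * (v + 1)))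
    (β := n / (u ^ 2 * v)) (by positivity) (by positivity) ?_ ?_ ?_ ?_ ?_ (hqt ▸ hc') ?_ hj'
  · exact ((div_le_one (by linarith)).2 (by linarith)).trans
      (one_le_add_one_pow_div_pow (by linarith) n)
  · rw [div_le_iff₀ (by linarith)]
    linarith
  · rw [mul_div_assoc', div_lt_div_iff₀ (by linarith) (by linarith)]
    push_cast
    linarith
  · rw [mul_div_assoc', div_div, div_lt_div_iff₀ (by linarith) (by linarith)]
    linarith
  · rw [hqt]
    exact (pow_mul_one_sub_div_le_sub_one_pow (by linarith) (2 * n)).trans hc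
  · exact (pow_mul_one_sub_div_le_sub_one_pow (by linarith) n).trans hj

end OrderedField

/-- The integer part of `(v + 1)²ⁿ / vⁿ` once `4ⁿ < v`; its residue modulo `v` is the central
binomial coefficient. -/
def binomTail (v : ℤ) (n : ℕ) : ℤ :=
  ∑ i ∈ Finset.range (n + 1), v ^ i * (2 * n).choose (n + i)

lemma dvd_binomTail_sub_choose (v : ℤ) (n : ℕ) : v ∣ binomTail v n - (2 * n).choose n := by
  rw [binomTail, Finset.sum_range_succ']
  simpa using Finset.dvd_sum fun i _ => (dvd_pow_self v i.succ_ne_zero).mul_right _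

lemma pow_le_binomTail {v : ℤ} (hv : 0 ≤ v) (n : ℕ) : v ^ n ≤ binomTail v n := by
  rw [binomTail, Finset.sum_range_succ, ← two_mul, Nat.choose_self]
  simpa using Finset.sum_nonneg fun i _ => by positivity

lemma add_one_pow_eq_pow_mul_binomTail_add (v : ℤ) (n : ℕ) :
    (v + 1) ^ (2 * n) =
      v ^ n * binomTail v n + ∑ i ∈ Finset.range n, v ^ i * (2 * n).choose i := by
  rw [add_pow, show 2 * n + 1 = n + (n + 1) by ring, Finset.sum_range_add, binomTail,
    Finset.mul_sum, add_comm]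
  congr! 2
  · simp [pow_add, mul_assoc]
  · simp

lemma sum_pow_mul_choose_mul_le {v : ℤ} (hv : 1 ≤ v) (n : ℕ) :
    (∑ i ∈ Finset.range n, v ^ i * (2 * n).choose i) * v ≤ v ^ n * 4 ^ n := by
  have sum_choose : ∑ i ∈ Finset.range (2 * n + 1), ((2 * n).choose i : ℤ) = 4 ^ n := by
    have := Nat.sum_range_choose (2 * n)
    rw [pow_mul] at this
    exact_mod_cast this
  calc (∑ i ∈ Finset.range n, v ^ i * (2 * n).choose i) * v
      = ∑ i ∈ Finset.range n, v ^ (i + 1) * (2 * n).choose i := by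
        rw [Finset.sum_mul]
        exact Finset.sum_congr rfl fun i _ => by ring
    _ ≤ ∑ i ∈ Finset.range n, v ^ n * (2 * n).choose i := by
        refine Finset.sum_le_sum fun i hi => ?_
        gcongr
        exact Finset.mem_range.1 hi
    _ = v ^ n * ∑ i ∈ Finset.range n, ((2 * n).choose i : ℤ) := (Finset.mul_sum ..).symm
    _ ≤ v ^ n * ∑ i ∈ Finset.range (2 * n + 1), ((2 * n).choose i : ℤ) := by
        gcongr
        lia
    _ = v ^ n * 4 ^ n := by rw [sum_choose]

lemma abs_add_one_pow_div_sub_binomTail_le {v g : ℤ} {n : ℕ} (hg : 0 < g)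
    (hv : 8 * 4 ^ n * g ≤ v) :
    |((v : ℚ) + 1) ^ (2 * n) / v ^ n - binomTail v n| ≤ 1 / (8 * g) := by
  have hv0 : 0 < v := lt_of_lt_of_le (by positivity) hv
  set r : ℤ := ∑ i ∈ Finset.range n, v ^ i * (2 * n).choose i
  have hr0 : 0 ≤ r := Finset.sum_nonneg fun i _ => by positivity
  have hr : r * (8 * g) ≤ v ^ n := by
    have : r * (8 * 4 ^ n * g) ≤ v ^ n * 4 ^ n :=
      (mul_le_mul_of_nonneg_left hv hr0).trans (sum_pow_mul_choose_mul_le hv0 n)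
    exact le_of_mul_le_mul_right (by linarith) (by positivity : (0 : ℤ) < 4 ^ n)
  have hvn : (0 : ℚ) < v ^ n := by positivity
  have hdiff : ((v : ℚ) + 1) ^ (2 * n) / v ^ n - binomTail v n = r / v ^ n := by
    rw [div_sub' hvn.ne', div_left_inj' hvn.ne', sub_eq_iff_eq_add']
    exact_mod_cast add_one_pow_eq_pow_mul_binomTail_add v n
  rw [hdiff, abs_of_nonneg (by positivity), div_le_div_iff₀ hvn (by positivity), one_mul]
  exact_mod_cast hr

theorem abs_lucas_div_lucas_sub_lt {a p u v g : ℤ} {n : ℕ} (ha : 2 * a = u * (v + 1))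
    (hp : 2 * p = u ^ 2 * v) (hu : 1 ≤ u) (hg : 1 ≤ g) (hv4 : 8 * 4 ^ n * g ≤ v)
    (hv2 : 64 * 2 ^ n * g ≤ v) (hnu : n * v ^ n ≤ u * 2 ^ n) :
    |(lucas a (2 * n + 1) : ℚ) / lucas p (n + 1) - binomTail v n| < 1 / (4 * g) := by
  have hv64 : 64 ≤ v := by
    have : 1 ≤ 2 ^ n * g := one_le_mul_of_one_le_of_one_le (one_le_pow₀ one_le_two) hg
    linarith
  have ha1 : 1 ≤ a := by nlinarith
  have hp1 : 1 ≤ p := by nlinarith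
  have quotient : |(lucas a (2 * n + 1) : ℚ) / lucas p (n + 1) - (v + 1) ^ (2 * n) / v ^ n| <
      1 / (8 * g) := by
    apply abs_div_sub_add_one_pow_div_lt (u := (u : ℚ))
    · exact_mod_cast hu
    · exact_mod_cast hg
    · exact_mod_cast hv2
    · exact_mod_cast hnu
    · exact_mod_cast ha ▸ pow_le_lucas ha1 (2 * n)
    · exact_mod_cast ha ▸ lucas_le_pow ha1 (2 * n)
    · exact_mod_cast hp ▸ pow_le_lucas hp1 n
    · exact_mod_cast hp ▸ lucas_le_pow hp1 n
  have tail := abs_add_one_pow_div_sub_binomTail_le (by lia) hv4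
  calc |(lucas a (2 * n + 1) : ℚ) / lucas p (n + 1) - binomTail v n|
    _ ≤ _ := abs_sub_le _ _ _
    _ < 1 / (8 * g : ℚ) + 1 / (8 * g) := add_lt_add_of_lt_of_le quotient tail
    _ = 1 / (4 * g : ℚ) := by field_simp; norm_num

/-! ### From a binomial coefficient to the relations -/

section

variable {b X Y g h k l w x y a p : ℤ} {n : ℕ}

lemma pellTower_of_A_eq (hA : A X Y g l w = 2 * a) :
    PellTower a (C X Y g h l w) x (D X Y g h l w) (E X Y g h l w x) (F X Y g h l w x)
      (G X Y g h l w x) :=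
  ⟨by rw [D, hA], rfl, by rw [F, hA], by rw [G, hA]⟩

lemma exists_A_eq (X Y g l w : ℤ) :
    ∃ a, A X Y g l w = 2 * a ∧ 2 * a = U X Y l * (V Y g w + 1) :=
  ⟨l * X * Y * (V Y g w + 1), by rw [A, U]; ring, by rw [U]; ring⟩

lemma exists_sq_U_mul_V_eq (X Y g l w : ℤ) : ∃ p, U X Y l ^ 2 * V Y g w = 2 * p :=
  ⟨2 * (l * X * Y) ^ 2 * V Y g w, by rw [U]; ring⟩

lemma exists_lucas_eq_add_mul (hn : 2 ≤ n) (hb : b ≤ n) (ha : n + 2 ≤ a) :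
    ∃ h, b ≤ h ∧ lucas a (n + 1) = n + 1 + (2 * a - 2) * h := by
  obtain ⟨h, hh⟩ := two_mul_sub_one_dvd_lucas_sub a (n + 1)
  have growth : (2 * a - 1) ^ 2 ≤ lucas a (n + 1) :=
    (pow_le_pow_right₀ (by lia) hn).trans (pow_le_lucas (by lia) n)
  push_cast at hh
  refine ⟨h, le_of_mul_le_mul_left (a := 2 * a - 2) ?_ (by lia), by linarith⟩
  nlinarith

lemma r1_of_C_eq (hA : A n Y g l w = 2 * a) (hC : C n Y g h l w = lucas a (2 * n + 1))
    (ha : 1 < a) (hn : 1 ≤ n) (b : ℤ) : ∃ x y, b ≤ x ∧ b ≤ y ∧ R1 n Y g h l w x y := by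
  obtain ⟨x, hbx, hx⟩ := exists_isSquare_of_eq_lucas ha (by lia : 3 ≤ 2 * n + 1) b
  obtain ⟨y, hby, hy⟩ := hx (hC ▸ pellTower_of_A_eq hA)
  refine ⟨x, y, hbx, hby, isSquare_iff_exists_sq _ |>.1 ?_⟩
  simpa [I, H, B, hC] using hy

lemma r2_of_J_eq (hp : U n Y l ^ 2 * V Y g w = 2 * p) (hJ : J n Y g k l w = lucas p (n + 1)) :
    R2 n Y g k l w := by
  obtain ⟨s, hs⟩ := isSquare_lucas p (n + 1)
  refine ⟨2 * s, ?_⟩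
  rw [hJ, show U n Y l ^ 4 * V Y g w ^ 2 = (2 * p) ^ 2 by rw [← hp]; ring]
  linear_combination 4 * hs

lemma r3_of_C_eq (hA : A X Y g l w = 2 * a) (hC : C X Y g h l w = lucas a n)
    (hbw : b * w = 2 ^ n) : R3 b X Y g h l w := by
  rw [R3, hA, hC, mul_assoc 3, hbw, ← mul_pow, hbw, pow_right_comm, ← mul_assoc]
  exact dvd_three_mul_two_pow_mul_lucas_sub a n

lemma r4_iff (hg : 0 < g) :
    R4 X Y g h k l w ↔
      J X Y g k l w ≠ 0 ∧ |(C X Y g h l w / J X Y g k l w : ℚ) - l * Y| < 1 / (4 * g) := by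
  have : 1 / (16 * (g : ℚ) ^ 2) = (1 / (4 * g)) ^ 2 := by ring
  rw [R4, this, sq_lt_sq, abs_of_pos (a := 1 / (4 * (g : ℚ))) (by positivity)]

lemma r5_iff :
    R5 X Y g h k l w ↔
      J X Y g k l w ≠ 0 ∧ |(C X Y g h l w / J X Y g k l w : ℚ) - l * Y| < 1 / 2 := by
  have : (1 / 4 : ℚ) = (1 / 2) ^ 2 := by norm_num
  rw [R5, this, sq_lt_sq, abs_of_pos (a := (1 / 2 : ℚ)) (by norm_num)]

lemma cond2_of_abs_lucas_div_lucas_sub_lt (hA : A n Y g l w = 2 * a)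
    (hp : U n Y l ^ 2 * V Y g w = 2 * p) (hna : 2 * n + 2 ≤ a) (hnp : n + 2 ≤ p) (hn : 2 ≤ n)
    (hg : 0 < g) (hb : b ≤ n) (hbl : b ≤ l) (hbw : b ≤ w) (hw : b * w = 2 ^ (2 * n + 1))
    (happrox : |(lucas a (2 * n + 1) : ℚ) / lucas p (n + 1) - l * Y| < 1 / (4 * g)) :
    Cond2 b n Y g := by
  obtain ⟨h, hbh, hh⟩ := exists_lucas_eq_add_mul (n := 2 * n) (a := a) (b := b) (by lia) (by lia)
    (by push_cast; exact hna)
  obtain ⟨k, hbk, hk⟩ := exists_lucas_eq_add_mul hn hb hnp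
  have hC : C n Y g h l w = lucas a (2 * n + 1) := by rw [C, B, hA, hh]; push_cast; rfl
  have hJ : J n Y g k l w = lucas p (n + 1) := by rw [J, hp, hk, mul_comm]
  have hJ0 : J n Y g k l w ≠ 0 := by
    have := natCast_le_lucas (by lia : 1 < p) (n + 1)
    lia
  obtain ⟨x, y, hbx, hby, hR1⟩ := r1_of_C_eq hA hC (by lia) (by lia) b
  exact ⟨h, k, l, w, x, y, hbh, hbk, hbl, hbw, hbx, hby, hR1, r2_of_J_eq hp hJ,
    r3_of_C_eq hA hC hw, (r4_iff hg).2 ⟨hJ0, by rwa [hC, hJ]⟩⟩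

lemma cond2_of_binomTail_eq (hn : 4 ≤ n) (hg : 1 ≤ g) (hb : b ≤ n) (hbl : b ≤ l) (hbw : b ≤ w)
    (hw : b * w = 2 ^ (2 * n + 1)) (hV : 8 * 4 ^ n * g ≤ V Y g w)
    (hl : binomTail (V Y g w) n = l * Y) : Cond2 b n Y g := by
  set v := V Y g w
  have h2n : (2 : ℤ) ^ 4 ≤ 2 ^ n := pow_le_pow_right₀ one_le_two hn
  have hv2 : 64 * 2 ^ n * g ≤ v := by
    have : 8 * 2 ^ n * g ≤ 2 ^ n * 2 ^ n * g := by gcongr; lia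
    rw [← mul_pow] at this
    norm_num at this
    linarith
  have hv : 64 ≤ v := by nlinarith
  have htail : v ^ n ≤ binomTail v n := pow_le_binomTail (by lia) n
  have hvn : v ≤ v ^ n := le_self_pow₀ (by lia) (by lia)
  have hU : U n Y l = 2 * n * binomTail v n := by rw [U, hl]; ring
  have hU64 : 64 * n ≤ U n Y l := by rw [hU]; nlinarith
  have hnU : n * v ^ n ≤ U n Y l * 2 ^ n := calc
    n * v ^ n ≤ 2 * n * binomTail v n := by gcongr; lia
    _ = U n Y l := hU.symm
    _ ≤ U n Y l * 2 ^ n := le_mul_of_one_le_right (by lia) (by lia)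
  obtain ⟨a, hA, ha⟩ := exists_A_eq n Y g l w
  obtain ⟨p, hp⟩ := exists_sq_U_mul_V_eq n Y g l w
  have happrox := abs_lucas_div_lucas_sub_lt ha hp.symm (by lia) hg hV hv2 hnU
  rw [hl, Int.cast_mul] at happrox
  exact cond2_of_abs_lucas_div_lucas_sub_lt hA hp (by nlinarith) (by nlinarith) (by lia) (by lia)
    hb hbl hbw hw happrox

lemma four_le_of_dvd_choose (hY : 64 < Y) (h : Y ∣ (2 * n).choose n) : 4 ≤ n := by
  by_contra! hn
  have hchoose : (2 * n).choose n ≤ 64 :=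
    (Nat.choose_le_two_pow _ _).trans (Nat.pow_le_pow_right two_pos (by lia) : _ ≤ 2 ^ 6)
  have := Int.le_of_dvd (mod_cast Nat.choose_pos (by lia)) h
  lia

theorem Cond1.cond2 (hbX : b ≤ X) (hY : max b (2 ^ 8) ≤ Y) (hg : 1 ≤ g) (h : Cond1 b X Y) :
    Cond2 b X Y g := by
  obtain ⟨⟨t, rfl⟩, hchoose⟩ := h
  obtain ⟨hbY, hY⟩ := max_le_iff.1 hY
  have hb : (1 : ℤ) ≤ 2 ^ t := one_le_pow₀ one_le_two
  lift X to ℕ using by lia with n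
  rw [Int.toNat_natCast] at hchoose
  have hn : 4 ≤ n := four_le_of_dvd_choose (by lia) hchoose
  have htn : t < n := Nat.lt_two_pow_self.trans_le (mod_cast hbX)
  set w : ℤ := 2 ^ (2 * n + 1 - t)
  have hw : 2 ^ t * w = 2 ^ (2 * n + 1) := by rw [← pow_add]; congr 1; lia
  have hbw : 2 ^ t ≤ w := pow_le_pow_right₀ one_le_two (by lia)
  have hgw : 1 ≤ g * w := one_le_mul_of_one_le_of_one_le hg (by lia)
  have hV : 8 * 4 ^ n * g ≤ V Y g w := calc
    8 * 4 ^ n * g = 4 * g * (2 ^ t * w) := by rw [hw, pow_succ, pow_mul]; ring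
    _ = 4 * (g * w * 2 ^ t) := by ring
    _ ≤ 4 * (g * w * Y) := by gcongr
    _ = V Y g w := by rw [V]; ring
  have hbYV : 2 ^ t * Y ≤ V Y g w := by
    rw [V]
    gcongr
    nlinarith
  have hV1 : 1 ≤ V Y g w := (one_le_mul_of_one_le_of_one_le hb (by lia)).trans hbYV
  obtain ⟨l, hl⟩ : Y ∣ binomTail (V Y g w) n :=
    (dvd_iff_dvd_of_dvd_sub ((Dvd.intro_left _ rfl).trans (dvd_binomTail_sub_choose _ n))).2
      hchoose
  refine cond2_of_binomTail_eq hn hg hbX (le_of_mul_le_mul_right ?_ (by lia : 0 < Y)) hbw hw hV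
    (hl.trans (mul_comm Y l))
  calc 2 ^ t * Y ≤ V Y g w := hbYV
    _ ≤ V Y g w ^ n := le_self_pow₀ hV1 (by lia)
    _ ≤ binomTail (V Y g w) n := pow_le_binomTail (by lia) n
    _ = l * Y := hl.trans (mul_comm Y l)

end

/-! ### Recovering the indices of the Lucas numbers -/

section

variable {a p c j u v M z : ℤ} {n m N r : ℕ}

lemma le_abs_of_dvd_sub (h : M ∣ j - N) (hN : 2 * N ≤ |M|) : N ≤ |j| := by
  by_contra! hj
  rw [abs_lt] at hj
  have := Int.eq_zero_of_abs_lt_dvd ((abs_dvd M _).2 h) (by rw [abs_lt]; lia)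
  lia

lemma eq_lucas_of_abs_eq (h : |c| = |lucas a N|) (hc : 2 * (a - 1) ∣ c - N) (hN : 0 < N)
    (hNa : N < |a - 1|) : c = lucas a N := by
  refine (abs_eq_abs.1 h).resolve_right fun hneg => ?_
  have hdvd : 2 * (a - 1) ∣ 2 * N := by
    have := dvd_add hc (two_mul_sub_one_dvd_lucas_sub a N)
    rw [hneg] at this
    rw [← dvd_neg]
    convert this using 1
    ring
  have := Int.le_of_dvd (by lia) ((abs_dvd _ _).2 (Int.dvd_of_mul_dvd_mul_left two_ne_zero hdvd))
  lia

lemma le_of_abs_lucas_le_abs_lucas (ha : 1 ≤ |a|) (hap : |a| < |p|)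
    (h : |lucas p m| ≤ |lucas a r|) : m ≤ r := by
  by_contra! hrm
  rw [abs_lucas ha, abs_lucas (ha.trans hap.le)] at h
  replace h := (monotone_lucas (ha.trans hap.le) hrm).trans h
  obtain _ | s := r
  · simp at h
  · have hpow : (2 * |p| - 1) ^ (s + 1) ≤ (2 * |p| - 1) ^ s := calc
      (2 * |p| - 1) ^ (s + 1) ≤ lucas |a| (s + 1) := (pow_le_lucas (by lia) _).trans h
      _ ≤ (2 * |a|) ^ s := lucas_le_pow ha s
      _ ≤ (2 * |p| - 1) ^ s := pow_le_pow_left₀ (by lia) (by lia) s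
    exact (pow_lt_pow_right₀ (by lia) s.lt_succ_self).not_ge hpow

lemma eq_lucas_of_abs_le_abs_lucas (hj : |j| = |lucas p m|) (hjN : 2 * (p - 1) ∣ j - N)
    (hN : 0 < N) (hNr : N ≤ r) (hrp : r < |p - 1|) (ha : 1 ≤ |a|) (hap : |a| < |p|)
    (hle : |j| ≤ |lucas a r|) : j = lucas p N := by
  have hmr : m ≤ r := le_of_abs_lucas_le_abs_lucas ha hap (hj ▸ hle)
  have hM : |2 * (p - 1)| = 2 * |p - 1| := by rw [abs_mul, abs_two]
  have hmN : SignModEq (2 * (p - 1)) m N :=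
    (SignModEq.symm (.inl (two_mul_sub_one_dvd_lucas_sub p m))).trans
      ((SignModEq.of_abs_eq hj.symm).trans (.inl hjN))
  obtain rfl := hmN.natCast_eq (by lia) (by lia) hN
  exact eq_lucas_of_abs_eq hj hjN hN (by lia)

lemma mul_abs_sub_one_le_two_mul_abs (ha : 2 * a = u * (v + 1)) :
    |u| * (|v| - 1) ≤ 2 * |a| := by
  have : |v| - 1 ≤ |v + 1| := by simpa using abs_sub_abs_le_abs_sub v (-1)
  calc |u| * (|v| - 1) ≤ |u| * |v + 1| := by gcongr
    _ = 2 * |a| := by rw [← abs_mul, ← ha, abs_mul, abs_two]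

lemma two_mul_abs_le_mul_abs_add_one (ha : 2 * a = u * (v + 1)) :
    2 * |a| ≤ |u| * (|v| + 1) := by
  have : |v + 1| ≤ |v| + 1 := by simpa using abs_add_le v 1
  calc 2 * |a| = |u| * |v + 1| := by rw [← abs_mul, ← ha, abs_mul, abs_two]
    _ ≤ |u| * (|v| + 1) := by gcongr

lemma two_mul_abs_eq_sq_abs_mul_abs (hp : 2 * p = u ^ 2 * v) : 2 * |p| = |u| ^ 2 * |v| := by
  rw [← abs_two, ← abs_mul, hp, abs_mul, abs_pow]

lemma four_mul_add_four_le_abs_and_lt (ha : 2 * a = u * (v + 1)) (hp : 2 * p = u ^ 2 * v)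
    (hn : 1 ≤ n) (hu : 512 * n ≤ |u|) (hv : 1024 ≤ |v|) : 4 * n + 4 ≤ |a| ∧ |a| < |p| := by
  have lower := mul_abs_sub_one_le_two_mul_abs ha
  have upper := two_mul_abs_le_mul_abs_add_one ha
  have hp := two_mul_abs_eq_sq_abs_mul_abs hp
  have huv : |u| * 1024 ≤ |u| * |v| := by gcongr
  have huuv : 512 * (|u| * |v|) ≤ |u| * (|u| * |v|) := by gcongr; lia
  constructor <;> nlinarith

lemma abs_lt_of_abs_div_sub_lt_half (hj : j ≠ 0) (h : |(c / j : ℚ) - z| < 1 / 2) :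
    (2 * |z| - 1) * |j| < 2 * |c| ∧ 2 * |c| < (2 * |z| + 1) * |j| := by
  have hdist : 2 * |c - z * j| < |j| := by
    have hj' : (j : ℚ) ≠ 0 := mod_cast hj
    rw [div_sub' hj', abs_div, div_lt_iff₀ (abs_pos.2 hj'), mul_comm (j : ℚ)] at h
    have : 2 * |(c : ℚ) - z * j| < |(j : ℚ)| := by linarith
    exact_mod_cast this
  have lower := abs_sub_abs_le_abs_sub (z * j) c
  have upper := abs_sub_abs_le_abs_sub c (z * j)
  rw [abs_sub_comm, abs_mul] at lower
  rw [abs_mul] at upper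
  constructor <;> linarith

end

/-! ### Size estimates for the exponential relation -/

section

variable {c j q u v z L M T : ℤ} {n : ℕ}

lemma mul_pow_le_mul_two_pow (hu : 512 ≤ u) (hv : 1024 ≤ v) (huL : u = 2 * n * L)
    (hc : (u * (v - 1) - 1) ^ (2 * n) ≤ c) (hj : j ≤ (u ^ 2 * v) ^ n) (hj0 : 0 < j)
    (hcj : 2 * c ≤ (2 * L + 1) * j) : n * v ^ n ≤ u * 2 ^ n := by
  have base : u ^ 2 * v * v ≤ 2 * (u * (v - 1) - 1) ^ 2 := by
    have : 4 * u + 4 ≤ u * v := by nlinarith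
    nlinarith
  have hjc : j * v ^ n ≤ 2 ^ n * c := calc
    j * v ^ n ≤ (u ^ 2 * v) ^ n * v ^ n := by gcongr
    _ = (u ^ 2 * v * v) ^ n := (mul_pow _ _ _).symm
    _ ≤ (2 * (u * (v - 1) - 1) ^ 2) ^ n := pow_le_pow_left₀ (by positivity) base n
    _ = 2 ^ n * (u * (v - 1) - 1) ^ (2 * n) := by rw [mul_pow, pow_mul]
    _ ≤ 2 ^ n * c := by gcongr
  have hLv : 2 * v ^ n ≤ 2 ^ n * (2 * L + 1) := by
    refine le_of_mul_le_mul_left ?_ hj0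
    calc j * (2 * v ^ n) ≤ 2 ^ n * (2 * c) := by linarith
      _ ≤ 2 ^ n * ((2 * L + 1) * j) := by gcongr
      _ = j * (2 ^ n * (2 * L + 1)) := by ring
  have h2v : (2 : ℤ) ^ n ≤ v ^ n := pow_le_pow_left₀ two_pos.le (by lia) n
  calc n * v ^ n ≤ n * (2 * L * 2 ^ n) := by gcongr; linarith
    _ = u * 2 ^ n := by rw [huL]; ring

lemma thirtytwo_pow_mul_lt_pow (hn : 1 ≤ n) (hz : 1 ≤ z) (hv : 1024 * z ≤ v) :
    32 * 32 ^ n * n * z ^ 2 < v ^ (n + 1) := by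
  have hn32 : (n : ℤ) < 32 ^ n := mod_cast Nat.lt_pow_self (by norm_num)
  calc 32 * 32 ^ n * n * z ^ 2 < 32 * 32 ^ n * 32 ^ n * z ^ 2 := by gcongr
    _ = 32 * 1024 ^ n * z ^ 2 := by rw [mul_assoc 32, ← mul_pow]; norm_num
    _ ≤ 1024 * 1024 ^ n * z ^ (n + 1) := by gcongr <;> lia
    _ = (1024 * z) ^ (n + 1) := by ring
    _ ≤ v ^ (n + 1) := by gcongr

lemma eight_mul_sq_mul_sq_lt (hn : 1 ≤ n) (hz : 1 ≤ z) (hv : 1024 * z ≤ v) (hq : |q| ≤ n * z)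
    (hnu : n * v ^ n ≤ u * 2 ^ n) : 8 * (2 ^ (2 * n + 1)) ^ 2 * q ^ 2 < u * v := by
  refine lt_of_mul_lt_mul_right (a := 2 ^ n) ?_ (by positivity)
  calc 8 * (2 ^ (2 * n + 1)) ^ 2 * q ^ 2 * 2 ^ n = 32 * 2 ^ (5 * n) * |q| ^ 2 := by
        rw [sq_abs]; ring
    _ = 32 * 32 ^ n * |q| ^ 2 := by rw [pow_mul]; norm_num
    _ ≤ 32 * 32 ^ n * (n * z) ^ 2 := by gcongr
    _ = n * (32 * 32 ^ n * n * z ^ 2) := by ring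
    _ < n * v ^ (n + 1) := by gcongr; exact thirtytwo_pow_mul_lt_pow hn hz hv
    _ = n * v ^ n * v := by ring
    _ ≤ u * 2 ^ n * v := by gcongr; lia
    _ = u * v * 2 ^ n := by ring

lemma eq_of_dvd_two_mul_sub_mul (hT : 2 ≤ T) (hq : q ≠ 0) (hM : 8 * T ^ 2 * q ^ 2 < |M|)
    (h : M ∣ 2 * ((T - q) * (T * q + 1))) : q = T := by
  have hq1 : 1 ≤ |q| := Int.one_le_abs hq
  have hTq : T ≤ T * |q| := le_mul_of_one_le_right (by lia) hq1
  have hT0 : |T| = T := abs_of_pos (by lia)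
  have factor₁ : |T - q| ≤ 2 * (T * |q|) := by
    have := abs_sub T q
    nlinarith
  have factor₂ : |T * q + 1| ≤ 2 * (T * |q|) := by
    have := abs_add_le (T * q) 1
    rw [abs_mul, hT0, abs_one] at this
    lia
  have small : |2 * ((T - q) * (T * q + 1))| < |M| := calc
    |2 * ((T - q) * (T * q + 1))| = 2 * (|T - q| * |T * q + 1|) := by
      rw [abs_mul, abs_mul, abs_two]
    _ ≤ 2 * (2 * (T * |q|) * (2 * (T * |q|))) := by gcongr
    _ = 8 * T ^ 2 * q ^ 2 := by rw [← sq_abs q]; ring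
    _ < |M| := hM
  have hzero := Int.eq_zero_of_abs_lt_dvd ((abs_dvd _ _).2 h) small
  rcases mul_eq_zero.1 ((mul_eq_zero.1 hzero).resolve_left two_ne_zero) with h | h
  · lia
  · have := Int.le_of_dvd one_pos (⟨-q, by linarith⟩ : T ∣ 1)
    lia

end

/-! ### From the relations to a binomial coefficient -/

section

variable {b X Y g h k l w x y a p : ℤ} {n : ℕ}

/-- Otherwise `2A - 5` divides `2`, so that `A` is `2` or `3`, but `2Y` divides `A`. -/
lemma mul_ne_zero_of_r3 (hY : 2 ≤ Y) (h : R3 b X Y g h l w) : b * w ≠ 0 := by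
  intro hbw
  obtain ⟨z, hA⟩ : ∃ z, A X Y g l w = 2 * (Y * z) :=
    ⟨l * X * (V Y g w + 1), by rw [A, U]; ring⟩
  rw [R3, mul_assoc 3, ← mul_pow, hbw, hA] at h
  have hle := Int.le_of_dvd two_pos (b := 2) (by simpa using h)
  have hge := Int.le_of_dvd two_pos (b := 2) (by simpa using (neg_dvd.2 h))
  have hYz : Y ∣ 1 := ⟨z, by lia⟩
  have := Int.le_of_dvd one_pos hYz
  lia

lemma ne_zero_and_abs_lt_of_r5 (hR5 : R5 X Y g h k l w) :
    J X Y g k l w ≠ 0 ∧ (2 * |l * Y| - 1) * |J X Y g k l w| < 2 * |C X Y g h l w| ∧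
      2 * |C X Y g h l w| < (2 * |l * Y| + 1) * |J X Y g k l w| := by
  obtain ⟨hJ, hCJ⟩ := r5_iff.1 hR5
  rw [← Int.cast_mul] at hCJ
  exact ⟨hJ, abs_lt_of_abs_div_sub_lt_half hJ hCJ⟩

lemma abs_U (n : ℕ) (Y l : ℤ) : |U n Y l| = 2 * n * |l * Y| := by
  rw [show U n Y l = 2 * n * (l * Y) by rw [U]; ring, abs_mul, abs_of_nonneg (by positivity)]

lemma mul_natCast_le_abs_U (n : ℕ) (hl : 256 ≤ |l * Y|) : 512 * n ≤ |U n Y l| := by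
  rw [abs_U]
  nlinarith

lemma abs_C_eq_of_r1 (hR1 : R1 n Y g h l w x y) (hA : A n Y g l w = 2 * a) (ha : 1 < a.natAbs)
    (hn : 1 ≤ n) (hx : x ≠ 0) (hC : 2 * n + 1 ≤ |C n Y g h l w|) :
    |C n Y g h l w| = |lucas a (2 * n + 1)| := by
  have tower : PellTower a (C n Y g h l w) x _ _ _ _ := pellTower_of_A_eq hA
  refine tower.abs_eq_abs_lucas (H := H n Y g h l w x y) ha hx (by lia) (by push_cast; exact hC)
    ⟨B n + (2 * y - 1) * C n Y g h l w, by rw [H]; ring⟩ ?_ ((isSquare_iff_exists_sq _).2 hR1)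
  obtain ⟨z, hz⟩ := tower.two_mul_dvd_F_sub_one
  refine ⟨z * (B n - C n Y g h l w) + y * F n Y g h l w x, ?_⟩
  push_cast
  rw [H, ← B]
  linear_combination (B n - C n Y g h l w) * hz

lemma exists_abs_J_eq_of_r2 (hR2 : R2 X Y g k l w) (hp : U X Y l ^ 2 * V Y g w = 2 * p)
    (hp1 : 1 < p.natAbs) : ∃ m, |J X Y g k l w| = |lucas p m| := by
  refine exists_abs_eq_abs_lucas_of_four hp1 ((isSquare_iff_exists_sq _).2 ?_)
  obtain ⟨m, hm⟩ := hR2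
  exact ⟨m, by rw [← hm, ← hp]; ring⟩

lemma C_eq_lucas_and_J_eq_lucas (hA : A n Y g l w = 2 * a) (ha : 2 * a = U n Y l * (V Y g w + 1))
    (hp : U n Y l ^ 2 * V Y g w = 2 * p) (hn : 1 ≤ n) (hl : 256 ≤ |l * Y|)
    (hV : 1024 ≤ |V Y g w|) (hx : x ≠ 0) (hR1 : R1 n Y g h l w x y) (hR2 : R2 n Y g k l w)
    (hR5 : R5 n Y g h k l w) :
    C n Y g h l w = lucas a (2 * n + 1) ∧ J n Y g k l w = lucas p (n + 1) := by
  have hU := mul_natCast_le_abs_U n hl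
  obtain ⟨hna, hap⟩ := four_mul_add_four_le_abs_and_lt ha hp.symm hn hU hV
  have ha1 : |a| - 1 ≤ |a - 1| := by simpa using abs_sub_abs_le_abs_sub a 1
  have hp1 : |p| - 1 ≤ |p - 1| := by simpa using abs_sub_abs_le_abs_sub p 1
  have hCn : 2 * (a - 1) ∣ C n Y g h l w - (2 * n + 1 : ℕ) :=
    ⟨h, by rw [C, B, hA]; push_cast; ring⟩
  have hJn : 2 * (p - 1) ∣ J n Y g k l w - (n + 1 : ℕ) := ⟨k, by rw [J, hp]; push_cast; ring⟩
  have hJlower : (n + 1 : ℕ) ≤ |J n Y g k l w| :=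
    le_abs_of_dvd_sub hJn (by rw [abs_mul, abs_two]; lia)
  have hJC : 2 * |J n Y g k l w| ≤ |C n Y g h l w| := by
    have := (ne_zero_and_abs_lt_of_r5 hR5).2.1
    nlinarith
  have hC := abs_C_eq_of_r1 hR1 hA (by zify; lia) hn hx (by lia)
  obtain ⟨m, hm⟩ := exists_abs_J_eq_of_r2 hR2 hp (by zify; lia)
  exact ⟨eq_lucas_of_abs_eq hC hCn (by lia) (by lia),
    eq_lucas_of_abs_le_abs_lucas hm hJn (by lia) (by lia : n + 1 ≤ 2 * n + 1) (by lia) (by lia) hap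
      (by lia)⟩

lemma mul_abs_V_pow_le (ha : 2 * a = U n Y l * (V Y g w + 1))
    (hp : U n Y l ^ 2 * V Y g w = 2 * p) (hn : 1 ≤ n) (hl : 256 ≤ |l * Y|)
    (hV : 1024 ≤ |V Y g w|) (hC : C n Y g h l w = lucas a (2 * n + 1))
    (hJ : J n Y g k l w = lucas p (n + 1)) (hR5 : R5 n Y g h k l w) :
    n * |V Y g w| ^ n ≤ |U n Y l| * 2 ^ n := by
  have hU := mul_natCast_le_abs_U n hl
  obtain ⟨hna, hap⟩ := four_mul_add_four_le_abs_and_lt ha hp.symm hn hU hV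
  have ha_lower := mul_abs_sub_one_le_two_mul_abs ha
  obtain ⟨hJ0, -, hCJ⟩ := ne_zero_and_abs_lt_of_r5 hR5
  refine mul_pow_le_mul_two_pow (by lia) hV (abs_U n Y l) ?_ ?_ (abs_pos.2 hJ0) hCJ.le
  · rw [hC, abs_lucas (by lia)]
    refine (pow_le_pow_left₀ ?_ (by lia) _).trans (pow_le_lucas (by lia) _)
    nlinarith
  · rw [hJ, abs_lucas (by lia), ← two_mul_abs_eq_sq_abs_mul_abs hp.symm]
    exact lucas_le_pow (by lia) n

lemma mul_eq_two_pow_of_r3 (hA : A n Y g l w = 2 * a)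
    (ha : 2 * a = U n Y l * (V Y g w + 1)) (hb : 0 ≤ b) (hbn : b ≤ n) (hbw : b * w ≠ 0)
    (hU : 512 ≤ |U n Y l|) (hV : 1024 * |w| ≤ |V Y g w|)
    (hnU : n * |V Y g w| ^ n ≤ |U n Y l| * 2 ^ n) (hC : C n Y g h l w = lucas a (2 * n + 1))
    (hR3 : R3 b n Y g h l w) : b * w = 2 ^ (2 * n + 1) := by
  have hw : 1 ≤ |w| := Int.one_le_abs (right_ne_zero_of_mul hbw)
  have hn : 1 ≤ n := by
    have : b ≠ 0 := left_ne_zero_of_mul hbw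
    lia
  have hbw_le : |b * w| ≤ n * |w| := by rw [abs_mul, abs_of_nonneg hb]; gcongr
  have hM : |U n Y l| * |V Y g w| ≤ |4 * a - 5| := by
    have lower := mul_abs_sub_one_le_two_mul_abs ha
    have : 4 * |a| - 5 ≤ |4 * a - 5| := by simpa [abs_mul] using abs_sub_abs_le_abs_sub (4 * a) 5
    nlinarith
  refine eq_of_dvd_two_mul_sub_mul (le_self_pow₀ one_le_two (by lia)) hbw
    ((eight_mul_sq_mul_sq_lt hn hw hV hbw_le hnU).trans_le hM) (dvd_two_mul_two_pow_sub_mul ?_)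
  rw [R3, hA, hC] at hR3
  convert hR3 using 1 <;> ring

lemma binomTail_eq_of_r5 (ha : 2 * a = U n Y l * (V Y g w + 1))
    (hp : U n Y l ^ 2 * V Y g w = 2 * p) (hU : 1 ≤ |U n Y l|) (hV4 : 8 * 4 ^ n ≤ V Y g w)
    (hV2 : 64 * 2 ^ n ≤ V Y g w) (hnU : n * V Y g w ^ n ≤ |U n Y l| * 2 ^ n)
    (hC : C n Y g h l w = lucas a (2 * n + 1)) (hJ : J n Y g k l w = lucas p (n + 1))
    (hR5 : R5 n Y g h k l w) : binomTail (V Y g w) n = l * Y := by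
  have hV0 : 0 ≤ V Y g w := (by positivity : (0 : ℤ) ≤ 8 * 4 ^ n).trans hV4
  have ha' : 2 * |a| = |U n Y l| * (V Y g w + 1) := by
    rw [← abs_two, ← abs_mul, ha, abs_mul, abs_of_nonneg (a := V Y g w + 1) (by lia)]
  have approx := abs_lucas_div_lucas_sub_lt ha' (by rw [sq_abs, hp]) hU le_rfl
    (by rwa [mul_one]) (by rwa [mul_one]) hnU
  rw [lucas_abs_of_odd a (odd_two_mul_add_one n), ← hC, ← hJ] at approx
  have hR5 := (r5_iff.1 hR5).2
  have close : |(binomTail (V Y g w) n - l * Y : ℚ)| < 1 := by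
    rw [abs_lt] at approx hR5 ⊢
    norm_num at approx
    constructor <;> linarith [approx.1, approx.2, hR5.1, hR5.2]
  exact sub_eq_zero.1 (Int.abs_lt_one_iff.1 (mod_cast close))

lemma exists_eq_two_pow_of_dvd (hb : 0 ≤ b) (h : b ∣ 2 ^ n) : ∃ t : ℕ, b = 2 ^ t := by
  obtain ⟨t, -, ht⟩ := (dvd_prime_pow Int.prime_two n).1 h
  exact ⟨t, Int.eq_of_associated_of_nonneg ht hb (by positivity)⟩

lemma two_mul_two_pow_le_of_mul_eq_two_pow (hw : 0 < w) (hbn : b ≤ n)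
    (hbw : b * w = 2 ^ (2 * n + 1)) : 2 * 2 ^ n ≤ w := by
  have hn : (n : ℤ) ≤ 2 ^ n := mod_cast Nat.lt_two_pow_self.le
  refine le_of_mul_le_mul_left (a := 2 ^ n) ?_ (by positivity)
  calc 2 ^ n * (2 * 2 ^ n) = b * w := by rw [hbw]; ring
    _ ≤ 2 ^ n * w := by gcongr; exact hbn.trans hn

lemma four_mul_abs_mul_le_abs_V (hY : 0 ≤ Y) (hg : 1 ≤ g) : 4 * (|w| * Y) ≤ |V Y g w| := by
  have hV : V Y g w = g * (4 * (w * Y)) := by rw [V]; ring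
  rw [hV, abs_mul, abs_mul, abs_mul w, abs_of_nonneg hY, Nat.abs_ofNat]
  exact le_mul_of_one_le_left (by positivity) (hg.trans (le_abs_self g))

lemma dvd_choose_of_mul_eq_two_pow (ha : 2 * a = U n Y l * (V Y g w + 1))
    (hp : U n Y l ^ 2 * V Y g w = 2 * p) (hb : 0 ≤ b) (hbn : b ≤ n) (hbY : b ≤ Y) (hY : 256 ≤ Y)
    (hg : 1 ≤ g) (hU : 1 ≤ |U n Y l|) (hnU : n * |V Y g w| ^ n ≤ |U n Y l| * 2 ^ n)
    (hC : C n Y g h l w = lucas a (2 * n + 1)) (hJ : J n Y g k l w = lucas p (n + 1))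
    (hR5 : R5 n Y g h k l w) (hbw : b * w = 2 ^ (2 * n + 1)) : Y ∣ (2 * n).choose n := by
  have hw : 0 < w := pos_of_mul_pos_right (hbw ▸ by positivity) hb
  have hVw := four_mul_abs_mul_le_abs_V (w := w) (by lia : 0 ≤ Y) hg
  have hV0 : 0 ≤ V Y g w := by rw [V]; positivity
  rw [abs_of_nonneg hV0] at hnU hVw
  rw [abs_of_pos hw] at hVw
  have hV4 : 8 * 4 ^ n ≤ V Y g w := calc
    8 * 4 ^ n = 4 * (b * w) := by rw [hbw, pow_succ, pow_mul]; ring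
    _ ≤ 4 * (w * Y) := by rw [mul_comm b]; gcongr
    _ ≤ V Y g w := hVw
  have hV2 : 64 * 2 ^ n ≤ V Y g w := by
    have := two_mul_two_pow_le_of_mul_eq_two_pow hw hbn hbw
    nlinarith
  have hl := binomTail_eq_of_r5 ha hp hU hV4 hV2 hnU hC hJ hR5
  exact (dvd_iff_dvd_of_dvd_sub ((Dvd.intro_left _ rfl).trans (dvd_binomTail_sub_choose _ n))).1
    (Dvd.intro_left l hl.symm)

theorem Cond0a.cond1 (hb : 0 ≤ b) (hbX : b ≤ X) (hY : max b (2 ^ 8) ≤ Y) (hg : 1 ≤ g)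
    (h : Cond0a b X Y g) : Cond1 b X Y := by
  obtain ⟨h, k, l, w, x, y, hlx, hR1, hR2, hR3, hR5⟩ := h
  obtain ⟨hbY, hY⟩ := max_le_iff.1 hY
  norm_num at hY
  lift X to ℕ using hb.trans hbX with n
  have hbw : b * w ≠ 0 := mul_ne_zero_of_r3 (by lia) hR3
  have hn : 1 ≤ n := by
    have : b ≠ 0 := left_ne_zero_of_mul hbw
    lia
  have hw : 1 ≤ |w| := Int.one_le_abs (right_ne_zero_of_mul hbw)
  have hl : 256 ≤ |l * Y| := by
    rw [abs_mul, abs_of_nonneg (by lia : 0 ≤ Y)]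
    nlinarith [Int.one_le_abs (left_ne_zero_of_mul hlx)]
  have hU : 512 ≤ |U n Y l| := by have := mul_natCast_le_abs_U n hl; lia
  have hV : 1024 * |w| ≤ |V Y g w| := by
    have := four_mul_abs_mul_le_abs_V (w := w) (by lia : 0 ≤ Y) hg
    nlinarith
  obtain ⟨a, hA, ha⟩ := exists_A_eq n Y g l w
  obtain ⟨p, hp⟩ := exists_sq_U_mul_V_eq n Y g l w
  obtain ⟨hC, hJ⟩ := C_eq_lucas_and_J_eq_lucas hA ha hp hn hl (by lia)
    (right_ne_zero_of_mul hlx) hR1 hR2 hR5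
  have hnU := mul_abs_V_pow_le ha hp hn hl (by lia) hC hJ hR5
  have hpow := mul_eq_two_pow_of_r3 hA ha hb hbX hbw hU hV hnU hC hR3
  refine ⟨exists_eq_two_pow_of_dvd hb (Dvd.intro w hpow), ?_⟩
  rw [Int.toNat_natCast]
  exact dvd_choose_of_mul_eq_two_pow ha hp hb hbX hbY hY hg (by lia) hnU hC hJ hR5 hpow

theorem Cond2.cond0a (hb : 0 ≤ b) (hY : 2 ≤ Y) (hg : 1 ≤ g) (h : Cond2 b X Y g) :
    Cond0a b X Y g := by
  obtain ⟨h, k, l, w, x, y, -, -, hbl, -, hbx, -, hR1, hR2, hR3, hR4⟩ := h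
  have hb0 : b ≠ 0 := left_ne_zero_of_mul (mul_ne_zero_of_r3 hY hR3)
  refine ⟨h, k, l, w, x, y, mul_ne_zero (by lia) (by lia), hR1, hR2, hR3, hR4.1, hR4.2.trans_le ?_⟩
  have hg2 : (1 : ℚ) ≤ g ^ 2 := one_le_pow₀ (mod_cast hg)
  exact one_div_le_one_div_of_le (by norm_num) (by linarith)

end

theorem bridge_theorem_general {b X Y g : ℤ} (hb : 0 ≤ b) (hbX : b ≤ X)
    (hY : max b (2 ^ 8) ≤ Y) (hg : 1 ≤ g) :
    (Cond1 b X Y ↔ Cond2 b X Y g) ∧ (Cond1 b X Y ↔ Cond0a b X Y g) := by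
  have cond0a : Cond2 b X Y g → Cond0a b X Y g :=
    Cond2.cond0a hb (le_trans (by norm_num) (max_le_iff.1 hY).2) hg
  have cond1 : Cond0a b X Y g → Cond1 b X Y := Cond0a.cond1 hb hbX hY hg
  have cond2 : Cond1 b X Y → Cond2 b X Y g := Cond1.cond2 hbX hY hg
  exact ⟨⟨cond2, cond1 ∘ cond0a⟩, ⟨cond0a ∘ cond2, cond1⟩⟩

/-- **Bridge Theorem.** For integers `b ≥ 0`, `X ≥ 3b`, `Y ≥ max{b, 2⁸}` and
`g ≥ 1`, conditions (1), (2) and (0a) are equivalent.  Moreover,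
(1) ⟹ (2) already holds under the weaker hypothesis `X ≥ b`. -/
theorem bridge_theorem :
    (∀ b X Y g : ℤ, 0 ≤ b → 3 * b ≤ X → max b (2 ^ 8) ≤ Y → 1 ≤ g →
      (Cond1 b X Y ↔ Cond2 b X Y g) ∧ (Cond1 b X Y ↔ Cond0a b X Y g)) ∧
    (∀ b X Y g : ℤ, 0 ≤ b → b ≤ X → max b (2 ^ 8) ≤ Y → 1 ≤ g →
      Cond1 b X Y → Cond2 b X Y g) :=
  ⟨fun _ _ _ _ hb hbX hY hg => bridge_theorem_general hb (by lia) hY hg,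
    fun _ _ _ _ hb hbX hY hg => (bridge_theorem_general hb hbX hY hg).1.1⟩

end BridgeTheorem
end

section
/- For every integer n, one has n ≥ 0 if and only if there exist integers x, y, z with n = x² + y² + z² + z. -/
/-!
The integer `n` has the required form as soon as `4 * n + 1` is a sum of three squares, since
exactly one of those squares is odd. By Dirichlet's theorem there are a prime `p` and
`m ≡ 3 [MOD 8]` with `2 * p + 1 = m * (4 * n + 1)`, and quadratic reciprocity makes `-m` a square
modulo `2 * p`. From such a square root one writes down a positive definite integral ternary form
of determinant `1` taking the value `4 * n + 1`. By Hermite's bound a positive definite integral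
form of determinant `1` in at most five variables takes the value `1` on a vector of some basis of
the lattice; splitting off that vector and inducting on the rank shows that the form is a sum of
squares of integral linear forms.
-/

open Matrix NumberTheorySymbols

section Condensation

variable {R : Type*} {n : ℕ}

/-- The block upper triangular matrix with first row `r`, lower right corner `W`, and zeros below
`r 0`; it serves to extend square matrices by one row and one column. -/
def bordered [Zero R] (r : Fin (n + 1) → R) (W : Matrix (Fin n) (Fin n) R) :
    Matrix (Fin (n + 1)) (Fin (n + 1)) R :=
  of (Fin.cons r fun i ↦ Fin.cons 0 (W i))

/-- The Chio condensation of `S`, used to reduce the rank of a form by one. It is the Schur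
complement of the entry `S 0 0`, multiplied by `S 0 0` so that no division is needed. -/
def condensation [CommRing R] (S : Matrix (Fin (n + 1)) (Fin (n + 1)) R) :
    Matrix (Fin n) (Fin n) R :=
  of fun i j ↦ S 0 0 * S i.succ j.succ - S i.succ 0 * S 0 j.succ

variable [CommRing R]

lemma det_bordered (r : Fin (n + 1) → R) (W : Matrix (Fin n) (Fin n) R) :
    (bordered r W).det = r 0 * W.det := by
  have corner : (bordered r W).submatrix Fin.succ Fin.succ = W := rfl
  have col_zero (i : Fin n) : bordered r W i.succ 0 = 0 := rfl
  have corner_zero : bordered r W 0 0 = r 0 := rfl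
  simp [det_succ_column_zero, Fin.sum_univ_succ, col_zero, corner_zero, corner]

lemma pow_mul_det_eq_mul_det_condensation (S : Matrix (Fin (n + 1)) (Fin (n + 1)) R) :
    S 0 0 ^ n * S.det = S 0 0 * (condensation S).det := by
  let c : Fin (n + 1) → R := Fin.cons 1 fun _ ↦ S 0 0
  have row_reduction : (bordered (S 0) (condensation S)).det = (of fun i j ↦ c i * S i j).det := by
    refine det_eq_of_forall_row_eq_smul_add_const (Fin.cons 0 fun i ↦ -S i.succ 0) 0 rfl
      fun i j ↦ ?_
    cases i using Fin.cases <;> cases j using Fin.cases <;>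
      simp [bordered, condensation, c] <;> ring
  rw [← det_bordered (S 0), row_reduction, det_mul_column, Fin.prod_univ_succ]
  simp [c]

lemma smul_eq_vecMulVec_add_bordered (S : Matrix (Fin (n + 1)) (Fin (n + 1)) R) :
    S 0 0 • S = vecMulVec (S.col 0) (S.row 0) + bordered 0 (condensation S) := by
  ext i j
  cases i using Fin.cases <;> cases j using Fin.cases <;>
    simp [vecMulVec_apply, bordered, condensation, mul_comm]

lemma exists_eq_transpose_mul_self_of_condensation {S : Matrix (Fin (n + 1)) (Fin (n + 1)) R}
    (hS : S.IsSymm) (h00 : S 0 0 = 1) {W : Matrix (Fin n) (Fin n) R}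
    (hW : condensation S = Wᵀ * W) : ∃ V : Matrix (Fin (n + 1)) (Fin (n + 1)) R, S = Vᵀ * V := by
  have hsplit : S = vecMulVec (S.col 0) (S.row 0) + bordered 0 (Wᵀ * W) := by
    rw [← hW, ← smul_eq_vecMulVec_add_bordered, h00, one_smul]
  refine ⟨bordered (S 0) W, hsplit.trans ?_⟩
  ext i j
  cases i using Fin.cases <;> cases j using Fin.cases <;>
    simp [vecMulVec_apply, bordered, mul_apply, Fin.sum_univ_succ, h00, hS.apply]

lemma mul_dotProduct_mulVec_eq_sq_add {S : Matrix (Fin (n + 1)) (Fin (n + 1)) R} (hS : S.IsSymm)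
    (x : Fin (n + 1) → R) :
    S 0 0 * (x ⬝ᵥ S *ᵥ x) = (S 0 ⬝ᵥ x) ^ 2 + vecTail x ⬝ᵥ condensation S *ᵥ vecTail x := by
  have row_part : x ⬝ᵥ vecMulVec (S.col 0) (S.row 0) *ᵥ x = (S 0 ⬝ᵥ x) ^ 2 := by
    have col_eq_row : S.col 0 = S 0 := congrFun hS 0
    rw [col_eq_row, vecMulVec_mulVec, dotProduct_smul, dotProduct_comm x, sq]
    rfl
  have corner_part : x ⬝ᵥ bordered 0 (condensation S) *ᵥ x =
      vecTail x ⬝ᵥ condensation S *ᵥ vecTail x := by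
    simp [dotProduct, mulVec, Fin.sum_univ_succ, bordered, vecTail]
  rw [← smul_eq_mul, ← dotProduct_smul, ← smul_mulVec, smul_eq_vecMulVec_add_bordered, add_mulVec,
    dotProduct_add, row_part, corner_part]

lemma isSymm_condensation {S : Matrix (Fin (n + 1)) (Fin (n + 1)) R} (hS : S.IsSymm) :
    (condensation S).IsSymm := by
  ext i j
  simp only [condensation, transpose_apply, of_apply]
  rw [hS.apply i.succ j.succ, hS.apply i.succ 0, hS.apply 0 j.succ, mul_comm (S 0 j.succ)]

lemma exists_col_zero_eq_vecCons (U : GL (Fin (n + 1)) R) (k : R) :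
    ∃ V : GL (Fin (n + 2)) R, V.val.col 0 = vecCons k (U.val.col 0) := by
  let B := bordered (Fin.cons 1 fun _ ↦ k) U.val
  have hdet : IsUnit (B.submatrix id (Equiv.swap 0 1)).det := by
    rw [det_permute', Equiv.Perm.sign_swap (by simp), det_bordered]
    simp
  refine ⟨GeneralLinearGroup.mk'' _ hdet, ?_⟩
  ext i
  cases i using Fin.cases <;> simp [B, bordered]

end Condensation

section PosDef

variable {R : Type*} [CommRing R] [LinearOrder R] [IsStrictOrderedRing R] [StarRing R]
  [TrivialStar R] {n : ℕ} {S : Matrix (Fin (n + 1)) (Fin (n + 1)) R}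

lemma posDef_condensation (hS : S.PosDef) : (condensation S).PosDef := by
  have hsymm : S.IsSymm := isHermitian_iff_isSymm.1 hS.isHermitian
  have h00 : 0 < S 0 0 := hS.diag_pos
  refine .of_dotProduct_mulVec_pos (isHermitian_iff_isSymm.2 (isSymm_condensation hsymm))
    fun y hy ↦ ?_
  -- The first entry of `x` is chosen so that the linear form `S 0 ⬝ᵥ x` vanishes.
  let x : Fin (n + 1) → R := vecCons (-(vecTail (S 0) ⬝ᵥ y)) (S 0 0 • y)
  have hx : x ≠ 0 := by
    simp [x, h00.ne', hy]
  have hlin : S 0 ⬝ᵥ x = 0 := by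
    simp [x, vecHead]
  have hvalue : S 0 0 * (x ⬝ᵥ S *ᵥ x) = S 0 0 * (S 0 0 * (y ⬝ᵥ condensation S *ᵥ y)) := by
    rw [mul_dotProduct_mulVec_eq_sq_add hsymm, hlin]
    simp [x, mulVec_smul]
  have hpos : 0 < x ⬝ᵥ S *ᵥ x := by simpa using hS.dotProduct_mulVec_pos hx
  rw [mul_left_cancel₀ h00.ne' hvalue] at hpos
  simpa using pos_of_mul_pos_right hpos h00.le

lemma posDef_of_condensation (hsymm : S.IsSymm) (h00 : 0 < S 0 0) (hS : (condensation S).PosDef) :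
    S.PosDef := by
  refine .of_dotProduct_mulVec_pos (isHermitian_iff_isSymm.2 hsymm) fun x hx ↦ ?_
  rw [star_trivial]
  refine pos_of_mul_pos_right (a := S 0 0) ?_ h00.le
  rw [mul_dotProduct_mulVec_eq_sq_add hsymm]
  by_cases htail : vecTail x = 0
  · have hlin : S 0 ⬝ᵥ x = S 0 0 * vecHead x := by
      rw [← cons_head_tail x, htail]
      simp [vecHead]
    have hhead : vecHead x ≠ 0 := fun h0 ↦ hx <| by
      rw [← cons_head_tail x, h0, htail, cons_zero_zero]
    rw [htail, hlin]
    simp [sq_pos_of_ne_zero, h00.ne', hhead]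
  · have hpos : 0 < vecTail x ⬝ᵥ condensation S *ᵥ vecTail x := by
      simpa using hS.dotProduct_mulVec_pos htail
    exact add_pos_of_nonneg_of_pos (sq_nonneg _) hpos

lemma posDef_fin_three {S : Matrix (Fin 3) (Fin 3) R} (hsymm : S.IsSymm) (h00 : 0 < S 0 0)
    (hminor : 0 < S 0 0 * S 1 1 - S 1 0 * S 0 1) (hdet : 0 < S.det) : S.PosDef := by
  have hcond : IsSymm (condensation S) := isSymm_condensation hsymm
  have hcond_det : (condensation S).det = S 0 0 * S.det := by
    refine mul_left_cancel₀ h00.ne' ?_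
    rw [← pow_mul_det_eq_mul_det_condensation]
    ring
  have hpivot : 0 < condensation (condensation S) 0 0 := by
    have hpivot_eq : condensation (condensation S) 0 0 = (condensation S).det := by
      rw [det_fin_two, mul_comm (condensation S 0 1)]
      rfl
    rw [hpivot_eq, hcond_det]
    exact mul_pos h00 hdet
  have hempty (T : Matrix (Fin 0) (Fin 0) R) : T.PosDef :=
    .of_dotProduct_mulVec_pos (Subsingleton.elim _ _) fun x hx ↦
      (hx (Subsingleton.elim x 0)).elim
  exact posDef_of_condensation hsymm h00 (posDef_of_condensation hcond hminor
    (posDef_of_condensation (isSymm_condensation hcond) hpivot (hempty _)))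

end PosDef

section Congruence

lemma posDef_transpose_mul_mul {ι R : Type*} [Fintype ι] [DecidableEq ι] [CommRing R]
    [PartialOrder R] [StarRing R] [TrivialStar R] {S : Matrix ι ι R} (hS : S.PosDef) (U : GL ι R) :
    (U.valᵀ * S * U.val).PosDef := by
  rw [← conjTranspose_eq_transpose_of_trivial]
  exact hS.conjTranspose_mul_mul_same (mulVec_injective_of_isUnit U.isUnit)

lemma det_transpose_mul_mul {ι : Type*} [Fintype ι] [DecidableEq ι] (S : Matrix ι ι ℤ)
    (U : GL ι ℤ) : (U.valᵀ * S * U.val).det = S.det := by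
  have hU : U.val.det ^ 2 = 1 := Int.isUnit_sq (isUnits_det_units U)
  rw [det_mul, det_mul, det_transpose]
  linear_combination S.det * hU

end Congruence

section Hermite

variable {n : ℕ}

lemma exists_apply_zero_zero_minimal {S : Matrix (Fin (n + 1)) (Fin (n + 1)) ℤ} (hS : S.PosDef) :
    ∃ U : GL (Fin (n + 1)) ℤ, ∀ V : GL (Fin (n + 1)) ℤ,
      (U.valᵀ * S * U.val) 0 0 ≤ (V.valᵀ * S * V.val) 0 0 := by
  let value (U : GL (Fin (n + 1)) ℤ) : ℤ := (U.valᵀ * S * U.val) 0 0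
  have value_pos (U) : 0 < value U := (posDef_transpose_mul_mul hS U).diag_pos
  refine ⟨Function.argmin fun U ↦ (value U).toNat, fun V ↦ ?_⟩
  have hle := Function.argmin_le (fun U ↦ (value U).toNat) V
  exact (Int.toNat_le.1 hle).trans_eq (Int.toNat_of_nonneg (value_pos V).le)

lemma exists_abs_two_mul_add_le {a : ℤ} (ha : 0 < a) (b : ℤ) : ∃ k : ℤ, |2 * (a * k + b)| ≤ a := by
  refine ⟨-((2 * b + a) / (2 * a)), abs_le.2 ?_⟩
  have hdiv := Int.mul_ediv_add_emod (2 * b + a) (2 * a)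
  have hnonneg := Int.emod_nonneg (2 * b + a) (by lia : 2 * a ≠ 0)
  have hlt := Int.emod_lt_of_pos (2 * b + a) (by lia : 0 < 2 * a)
  constructor <;> linarith

lemma exists_four_mul_mul_apply_zero_zero_le {S : Matrix (Fin (n + 2)) (Fin (n + 2)) ℤ}
    (hS : S.PosDef) (U : GL (Fin (n + 1)) ℤ) :
    ∃ V : GL (Fin (n + 2)) ℤ, 4 * (S 0 0 * (V.valᵀ * S * V.val) 0 0) ≤
      S 0 0 ^ 2 + 4 * (U.valᵀ * condensation S * U.val) 0 0 := by
  let y := U.val.col 0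
  obtain ⟨k, hk⟩ := exists_abs_two_mul_add_le hS.diag_pos (vecTail (S 0) ⬝ᵥ y)
  obtain ⟨V, hV⟩ : ∃ V : GL (Fin (n + 2)) ℤ, V.val.col 0 = vecCons k y :=
    exists_col_zero_eq_vecCons U k
  have hvalue : S 0 0 * (V.valᵀ * S * V.val) 0 0 =
      (S 0 0 * k + vecTail (S 0) ⬝ᵥ y) ^ 2 + (U.valᵀ * condensation S * U.val) 0 0 := by
    calc S 0 0 * (V.valᵀ * S * V.val) 0 0
        = S 0 0 * (V.val.col 0 ⬝ᵥ S *ᵥ V.val.col 0) := by rw [mul_mul_apply]; rfl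
      _ = (S 0 0 * k + vecTail (S 0) ⬝ᵥ y) ^ 2 + y ⬝ᵥ condensation S *ᵥ y := by
        rw [hV, mul_dotProduct_mulVec_eq_sq_add (isHermitian_iff_isSymm.1 hS.isHermitian),
          dotProduct_cons, tail_cons]
        rfl
      _ = _ := by rw [mul_mul_apply]; rfl
  refine ⟨V, ?_⟩
  linarith [sq_le_sq' (abs_le.1 hk).1 (abs_le.1 hk).2]

lemma three_pow_mul_pow_le_four_pow_mul {R : Type*} [CommSemiring R] [LinearOrder R]
    [IsStrictOrderedRing R] {a b d : R} {c m : ℕ} (ha : 0 < a) (hab : 3 * a ^ 2 ≤ 4 * b)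
    (hb : 3 ^ c * b ^ (m + 1) ≤ 4 ^ c * (a ^ m * d)) :
    3 ^ (m + 1 + c) * a ^ (m + 2) ≤ 4 ^ (m + 1 + c) * d := by
  refine le_of_mul_le_mul_left ?_ (pow_pos ha m)
  calc a ^ m * (3 ^ (m + 1 + c) * a ^ (m + 2))
      = 3 ^ c * (3 * a ^ 2) ^ (m + 1) := by ring
    _ ≤ 3 ^ c * (4 * b) ^ (m + 1) := by gcongr
    _ = 4 ^ (m + 1) * (3 ^ c * b ^ (m + 1)) := by ring
    _ ≤ 4 ^ (m + 1) * (4 ^ c * (a ^ m * d)) := by gcongr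
    _ = a ^ m * (4 ^ (m + 1 + c) * d) := by ring

/-- **Hermite's bound**: the minimum of a positive definite form of rank `r` and determinant `d` is
at most `(4 / 3) ^ ((r - 1) / 2) * d ^ (1 / r)`, here raised to the power `r = n + 1`. -/
theorem exists_three_pow_mul_apply_zero_zero_pow_le :
    ∀ {n : ℕ} {S : Matrix (Fin (n + 1)) (Fin (n + 1)) ℤ}, S.PosDef →
      ∃ U : GL (Fin (n + 1)) ℤ, 3 ^ (n + 1).choose 2 * (U.valᵀ * S * U.val) 0 0 ^ (n + 1) ≤
        4 ^ (n + 1).choose 2 * S.det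
  | 0, _, _ => ⟨1, by simp⟩
  | n + 1, S, hS => by
    obtain ⟨U, hmin⟩ := exists_apply_zero_zero_minimal hS
    refine ⟨U, ?_⟩
    have hT : (U.valᵀ * S * U.val).PosDef := posDef_transpose_mul_mul hS U
    rw [← det_transpose_mul_mul S U]
    set T := U.valᵀ * S * U.val with T_def
    obtain ⟨U', hU'⟩ := exists_three_pow_mul_apply_zero_zero_pow_le (posDef_condensation hT)
    obtain ⟨V, hV⟩ := exists_four_mul_mul_apply_zero_zero_le hT U'
    have h00 : 0 < T 0 0 := hT.diag_pos
    have hle : T 0 0 ≤ (V.valᵀ * T * V.val) 0 0 := by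
      simpa [T_def, transpose_mul, mul_assoc] using hmin (U * V)
    have hbound : 3 * T 0 0 ^ 2 ≤ 4 * (U'.valᵀ * condensation T * U'.val) 0 0 := by
      linarith [mul_le_mul_of_nonneg_left hle h00.le]
    have hdet : (condensation T).det = T 0 0 ^ n * T.det := by
      refine mul_left_cancel₀ h00.ne' ?_
      rw [← pow_mul_det_eq_mul_det_condensation]
      ring
    rw [hdet] at hU'
    rw [Nat.choose_succ_succ' (n + 1) 1, Nat.choose_one_right]
    exact three_pow_mul_pow_le_four_pow_mul h00 hbound hU'

lemma exists_apply_zero_zero_eq_one (hn : n ≤ 4) {S : Matrix (Fin (n + 1)) (Fin (n + 1)) ℤ}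
    (hS : S.PosDef) (hdet : S.det = 1) :
    ∃ U : GL (Fin (n + 1)) ℤ, (U.valᵀ * S * U.val) 0 0 = 1 := by
  obtain ⟨U, hU⟩ := exists_three_pow_mul_apply_zero_zero_pow_le hS
  have hpos : 0 < (U.valᵀ * S * U.val) 0 0 := (posDef_transpose_mul_mul hS U).diag_pos
  refine ⟨U, le_antisymm (not_lt.1 fun hlt ↦ ?_) hpos⟩
  have htwo : (3 : ℤ) ^ (n + 1).choose 2 * 2 ^ (n + 1) ≤ 4 ^ (n + 1).choose 2 := by
    rw [hdet, mul_one] at hU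
    refine le_trans ?_ hU
    gcongr
    exact hlt
  interval_cases n <;> norm_num [Nat.choose] at htwo

theorem exists_eq_transpose_mul_self_of_posDef_of_det_eq_one :
    ∀ {n : ℕ}, n ≤ 5 → ∀ {S : Matrix (Fin n) (Fin n) ℤ}, S.PosDef → S.det = 1 →
      ∃ V : Matrix (Fin n) (Fin n) ℤ, S = Vᵀ * V
  | 0, _, _, _, _ => ⟨0, Subsingleton.elim _ _⟩
  | n + 1, hn, S, hS, hdet => by
    obtain ⟨U, h00⟩ := exists_apply_zero_zero_eq_one (by lia) hS hdet
    have hT : (U.valᵀ * S * U.val).PosDef := posDef_transpose_mul_mul hS U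
    have hT_det : (U.valᵀ * S * U.val).det = 1 := by rw [det_transpose_mul_mul, hdet]
    set T := U.valᵀ * S * U.val with T_def
    have hcond_det : (condensation T).det = 1 := by
      simpa [h00, hT_det] using (pow_mul_det_eq_mul_det_condensation T).symm
    obtain ⟨W, hW⟩ := exists_eq_transpose_mul_self_of_posDef_of_det_eq_one (by lia)
      (posDef_condensation hT) hcond_det
    obtain ⟨V, hV⟩ := exists_eq_transpose_mul_self_of_condensation
      (isHermitian_iff_isSymm.1 hT.isHermitian) h00 hW
    refine ⟨V * U⁻¹.val, ?_⟩
    calc S = (U.val * U⁻¹.val)ᵀ * S * (U.val * U⁻¹.val) := by simp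
      _ = U⁻¹.valᵀ * T * U⁻¹.val := by simp only [T_def, transpose_mul, mul_assoc]
      _ = (V * U⁻¹.val)ᵀ * (V * U⁻¹.val) := by rw [hV]; simp only [transpose_mul, mul_assoc]

end Hermite

section SumThreeSquares

lemma exists_sq_add_sq_add_sq_eq_of_dvd {N d t : ℤ} (hd : 0 < d) (hq : 0 < d * N - 1)
    (hdvd : d * N - 1 ∣ t ^ 2 + d) : ∃ x y z : ℤ, x ^ 2 + y ^ 2 + z ^ 2 = N := by
  obtain ⟨a, ha⟩ := hdvd
  have ha_pos : 0 < a := pos_of_mul_pos_right (ha ▸ by positivity) hq.le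
  let S : Matrix (Fin 3) (Fin 3) ℤ := !![a, t, 1; t, d * N - 1, 0; 1, 0, N]
  have hsymm : S.IsSymm := by
    ext i j
    fin_cases i <;> fin_cases j <;> rfl
  have hminor : S 0 0 * S 1 1 - S 1 0 * S 0 1 = d := by
    change a * (d * N - 1) - t * t = d
    linear_combination -ha
  have hdet : S.det = 1 := by
    rw [det_fin_three]
    change a * (d * N - 1) * N - a * 0 * 0 - t * t * N + t * 0 * 1 + 1 * t * 0 -
      1 * (d * N - 1) * 1 = 1
    linear_combination -N * ha
  have hS : S.PosDef :=
    posDef_fin_three hsymm ha_pos (hminor.symm ▸ hd) (hdet.symm ▸ one_pos)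
  obtain ⟨V, hV⟩ := exists_eq_transpose_mul_self_of_posDef_of_det_eq_one (by norm_num) hS hdet
  refine ⟨V 0 2, V 1 2, V 2 2, ?_⟩
  have hN : N = (Vᵀ * V) 2 2 := congrFun₂ hV 2 2
  rw [hN, mul_apply, Fin.sum_univ_three]
  simp only [transpose_apply, sq]

lemma jacobiSym_neg_eq_of_mod_four_eq_three {m b : ℕ} (hm : m % 4 = 3) (hb : Odd b) :
    J(-m | b) = J(b | m) := by
  rw [jacobiSym.neg _ hb]
  rcases Nat.odd_mod_four_iff.1 (Nat.odd_iff.1 hb) with hb4 | hb4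
  · have hm_odd : Odd m := Nat.odd_iff.2 (Nat.odd_of_mod_four_eq_three hm)
    rw [ZMod.χ₄_nat_one_mod_four hb4, one_mul,
      jacobiSym.quadratic_reciprocity_one_mod_four' hm_odd hb4]
  · rw [ZMod.χ₄_nat_three_mod_four hb4, jacobiSym.quadratic_reciprocity_three_mod_four hm hb4,
      neg_one_mul, neg_neg]

lemma jacobiSym_neg_two_of_mod_eight_eq_three {m : ℕ} (hm : m % 8 = 3) : J(-2 | m) = 1 := by
  rw [jacobiSym.at_neg_two (Nat.odd_iff.2 (by lia)), ZMod.χ₈'_nat_eq_if_mod_eight,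
    if_neg (by lia), if_pos (Or.inr hm)]

lemma jacobiSym_neg_eq_one_of_dvd {m b : ℕ} (hm : m % 8 = 3) (hb : Odd b)
    (hdvd : m ∣ 2 * b + 1) : J(-m | b) = 1 := by
  have hmod : (-2 * b : ℤ) ≡ 1 [ZMOD m] := by
    refine Int.modEq_iff_dvd.2 ?_
    convert Int.natCast_dvd_natCast.2 hdvd using 1
    push_cast
    ring
  calc J(-m | b) = J(b | m) := jacobiSym_neg_eq_of_mod_four_eq_three (by lia) hb
    _ = J(-2 * b | m) := by
      rw [jacobiSym.mul_left, jacobiSym_neg_two_of_mod_eight_eq_three hm, one_mul]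
    _ = 1 := by rw [jacobiSym.mod_left' hmod, jacobiSym.one_left]

lemma exists_dvd_sq_add_of_jacobiSym_neg_eq_one {p : ℕ} [Fact p.Prime] {d : ℤ}
    (hd : J(-d | p) = 1) : ∃ t : ℤ, (p : ℤ) ∣ t ^ 2 + d := by
  obtain ⟨r, hr⟩ := ZMod.isSquare_of_jacobiSym_eq_one hd
  obtain ⟨t, rfl⟩ := ZMod.intCast_surjective r
  refine ⟨t, (ZMod.intCast_zmod_eq_zero_iff_dvd _ p).1 ?_⟩
  push_cast at hr ⊢
  rw [sq, ← hr, neg_add_cancel]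

lemma exists_two_mul_dvd_sq_add {b t d : ℤ} (hb : Odd b) (hd : Odd d) (hdvd : b ∣ t ^ 2 + d) :
    ∃ s : ℤ, 2 * b ∣ s ^ 2 + d := by
  obtain ⟨s, hs, hs_odd⟩ : ∃ s : ℤ, b ∣ s ^ 2 + d ∧ Odd s := by
    rcases Int.even_or_odd t with ht | ht
    · refine ⟨t + b, ?_, ht.add_odd hb⟩
      have hshift : (t + b) ^ 2 + d = t ^ 2 + d + b * (2 * t + b) := by ring
      exact hshift ▸ hdvd.add (dvd_mul_right b _)
    · exact ⟨t, hdvd, ht⟩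
  exact ⟨s, (Int.isCoprime_two_left.2 hb).mul_dvd (hs_odd.pow.add_odd hd).two_dvd hs⟩

lemma exists_prime_two_mul_add_one_eq (k : ℕ) :
    ∃ p j : ℕ, p.Prime ∧ 2 * p + 1 = (8 * j + 3) * (4 * k + 1) := by
  -- Solving for `p`, the equation says `p = 6 * k + 1 + 4 * (4 * k + 1) * j`.
  have hcoprime : (6 * k + 1).Coprime (4 * (4 * k + 1)) := by
    refine Nat.Coprime.mul_right ?_ ?_
    · exact Nat.Coprime.pow_right 2 (Nat.coprime_two_right.2 ⟨3 * k, by ring⟩)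
    · refine Nat.isCoprime_iff_coprime.1 ⟨-2, 3, ?_⟩
      push_cast
      ring
  obtain ⟨p, hlt, hp, hmod⟩ := Nat.forall_exists_prime_gt_and_modEq (6 * k + 1) (by lia) hcoprime
  obtain ⟨j, hj⟩ := (Nat.modEq_iff_dvd' hlt.le).1 hmod.symm
  refine ⟨p, j, hp, ?_⟩
  rw [Nat.eq_add_of_sub_eq hlt.le hj]
  ring

theorem exists_sq_add_sq_add_sq_eq_four_mul_add_one (k : ℕ) :
    ∃ x y z : ℤ, x ^ 2 + y ^ 2 + z ^ 2 = 4 * k + 1 := by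
  obtain ⟨p, j, hp, hpj⟩ := exists_prime_two_mul_add_one_eq k
  have : Fact p.Prime := ⟨hp⟩
  have hp_odd : Odd p := Nat.odd_iff.2 (by lia)
  have hjacobi : J(-(8 * j + 3 : ℕ) | p) = 1 :=
    jacobiSym_neg_eq_one_of_dvd (by lia) hp_odd ⟨_, hpj⟩
  obtain ⟨t, ht⟩ := exists_dvd_sq_add_of_jacobiSym_neg_eq_one hjacobi
  obtain ⟨s, hs⟩ := exists_two_mul_dvd_sq_add (mod_cast hp_odd) ⟨4 * j + 1, by push_cast; ring⟩ ht
  have hq : ((8 * j + 3 : ℕ) : ℤ) * (4 * k + 1) - 1 = 2 * p := by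
    rw [sub_eq_iff_eq_add]
    exact_mod_cast hpj.symm
  have hp_pos : (0 : ℤ) < 2 * p := by exact_mod_cast Nat.mul_pos two_pos hp.pos
  exact exists_sq_add_sq_add_sq_eq_of_dvd (by positivity) (hq ▸ hp_pos) (hq ▸ hs)

lemma exists_eq_sum_sq_add_of_sum_sq_eq {x y z n : ℤ}
    (h : x ^ 2 + y ^ 2 + z ^ 2 = 4 * n + 1) :
    ∃ a b c : ℤ, n = a ^ 2 + b ^ 2 + c ^ 2 + c := by
  obtain ⟨a, rfl | rfl⟩ := Int.even_or_odd' x <;> obtain ⟨b, rfl | rfl⟩ := Int.even_or_odd' y <;>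
    obtain ⟨c, rfl | rfl⟩ := Int.even_or_odd' z <;> ring_nf at h
  · lia
  · exact ⟨a, b, c, by lia⟩
  · exact ⟨a, c, b, by lia⟩
  · lia
  · exact ⟨b, c, a, by lia⟩
  all_goals lia

end SumThreeSquares

/-- **Gauss–Legendre three squares theorem (variant).**
For every integer `n`, one has `n ≥ 0` if and only if there exist integers
`x, y, z` with `n = x² + y² + z² + z`. -/
theorem int_nonneg_iff_sum_three_squares (n : ℤ) :
    0 ≤ n ↔ ∃ x y z : ℤ, n = x ^ 2 + y ^ 2 + z ^ 2 + z := by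
  constructor
  · intro hn
    lift n to ℕ using hn
    obtain ⟨x, y, z, h⟩ := exists_sq_add_sq_add_sq_eq_four_mul_add_one n
    exact exists_eq_sum_sq_add_of_sum_sq_eq h
  · rintro ⟨x, y, z, rfl⟩
    have hz : 0 ≤ z ^ 2 + z := by
      rcases le_or_gt 0 z with hz | hz <;> nlinarith
    linarith [sq_nonneg x, sq_nonneg y]
end
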